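/- arXiv:1302.5396 — 2 statements merged into one kernel-verified Lean document; each statement's English description precedes it below -/
import Mathlib

section
/- Let f : {0,1}ⁿ → {0,1}ⁿ be a one-stepping Boolean system (H(s, f(s)) ≤ 1 for all s), let Q : ℝⁿ → [0,1]ⁿ be a continuous conversConversion of f, and let γ₁,…,γₙ > 0 be fixed. Then there exist μ > 0 and, for each s ∈ {0,1}ⁿ, a nonempty open set U^s ⊆ W^s ∩ [x⁻, x⁺]^{2n} such that for every choice of γ_{n+1},…,γ_{2n} ∈ (0, μ), every solution x of D₂(f,γ,Q) with x(0) ∈ ⋃_{s∈{0,1}ⁿ} U^s is strongly consistent with f: x has the transversality property and its Boolean itinerary s^x satisfies s^x(τ+1) = f(s^x(τ)) for all τ ≥ 0. -/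
/-- The cubic `g(x) = 3x - x³ - 3`. -/
noncomputable def gcub (x : ℝ) : ℝ := 3 * x - x ^ 3 - 3

/-- The piecewise linear function `L`: `0` for `x ≤ -1`, `(x+1)/2` for
`-1 < x < 1`, and `1` for `x ≥ 1`. -/
noncomputable def Lpl (x : ℝ) : ℝ := if x ≤ -1 then 0 else if x < 1 then (x + 1) / 2 else 1

/-- `W^s ⊆ ℝⁿ`: the set of `x` with `xᵢ < -1` when `sᵢ = 0` and `xᵢ > 1`
when `sᵢ = 1`. -/
def Wset (n : ℕ) (s : Fin n → Bool) : Set (Fin n → ℝ) :=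
  {x | ∀ i, if s i then 1 < x i else x i < -1}

/-- `Q : ℝⁿ → [0,1]ⁿ` is a continuous conversion of the Boolean map `f`. -/
def IsConversion (n : ℕ) (f : (Fin n → Bool) → Fin n → Bool)
    (Q : (Fin n → ℝ) → Fin n → ℝ) : Prop :=
  Continuous Q ∧ (∀ x i, Q x i ∈ Set.Icc (0 : ℝ) 1) ∧
  ∀ s : Fin n → Bool, ∀ x ∈ Wset n s, ∀ i, Q x i = if f s i then 1 else 0

/-- `(x, y) : [0,∞) → ℝⁿ × ℝⁿ` is a solution of the system `D₂(f, γ, Q)`: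
`ẋᵢ = γᵢ (g(xᵢ) + 6 L(yᵢ))` and `ẏᵢ = γ'ᵢ (g(yᵢ) + 6 Qᵢ(x))`, where the
`xᵢ` are the signature variables and the `yᵢ = x_{n+i}` the signaling ones. -/
def IsSolD2 (n : ℕ) (γ γ' : Fin n → ℝ) (Q : (Fin n → ℝ) → Fin n → ℝ)
    (x y : ℝ → Fin n → ℝ) : Prop :=
  ∀ i : Fin n, ∀ t : ℝ, 0 ≤ t →
    HasDerivAt (fun u => x u i) (γ i * (gcub (x t i) + 6 * Lpl (y t i))) t ∧
    HasDerivAt (fun u => y u i) (γ' i * (gcub (y t i) + 6 * Q (x t) i)) t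

/-- The discretization `S(x)ᵢ = 1` iff `xᵢ > 0`. -/
noncomputable def Sdisc (n : ℕ) (x : Fin n → ℝ) : Fin n → Bool := fun i => decide (0 < x i)

/-- The switching set: some signature coordinate vanishes. -/
def Bzero (n : ℕ) : Set (Fin n → ℝ) := {x | ∃ i, x i = 0}

/-- `σ : ℕ → {0,1}ⁿ` is the Boolean itinerary of the trajectory `x : ℝ → P`
under the discretization `S` (with switching set `B`): there is a finite or
infinite strictly increasing sequence of switching times `t 0 = 0 < t 1 < ⋯`
(indices `< K`, tending to `∞` if `K = ⊤`) such that the trajectory stays off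
`B` except possibly at switching times, `S ∘ x` is constant equal to `σ k` on
the `k`-th interval (including `u = 0` for `k = 0`), the values on consecutive
intervals differ, and `σ` is extended constantly after the last interval.
This encodes the transversality property together with the itinerary. -/
def IsItinerary {P : Type*} (n : ℕ) (x : ℝ → P) (S : P → Fin n → Bool)
    (B : Set P) (σ : ℕ → Fin n → Bool) : Prop :=
  ∃ (K : ℕ∞) (t : ℕ → ℝ), 1 ≤ K ∧ t 0 = 0 ∧
    (∀ k : ℕ, ((k : ℕ∞) + 1) < K → t k < t (k + 1)) ∧
    (K = ⊤ → Filter.Tendsto t Filter.atTop Filter.atTop) ∧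
    (∀ u : ℝ, 0 ≤ u → (∀ k : ℕ, 1 ≤ k → (k : ℕ∞) < K → u ≠ t k) → x u ∉ B) ∧
    (∀ k : ℕ, (k : ℕ∞) < K → ∀ u : ℝ,
      (t k < u ∨ (k = 0 ∧ u = 0)) → (∀ _ : ((k : ℕ∞) + 1) < K, u < t (k + 1)) →
      S (x u) = σ k) ∧
    (∀ k : ℕ, ((k : ℕ∞) + 1) < K → σ (k + 1) ≠ σ k) ∧
    (∀ τ : ℕ, K ≤ (τ : ℕ∞) + 1 → σ (τ + 1) = σ τ)

/-!
Multiplying coordinate `j` by the sign of `sⱼ` turns every step of `f` into the same picture: all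
signature variables `X` are at least `1`, all signaling variables `Y` are near or above `1/3`, and
at most one coordinate `i` has to become negative. Both nonlinearities are odd, so the equations
keep their form.

As long as `X ≥ 1 - δ`, continuity of `Q` keeps every forcing close to its Boolean value.
Coordinates `j ≠ i` then stay put, while `Yᵢ` is driven down, and `Xᵢ` cannot leave `[1, ∞)` before
`Yᵢ` has passed `-2/3`. When `Xᵢ` reaches `1 - δ`, it is already past the fold of the cubic and
falls to `-1` within a time `τ` that depends only on `γ` and `δ`. During this fall the forcings are
uncontrolled, but a slow `Yⱼ` loses at most `21 γ'ⱼ τ`. It recovers this loss in the next slow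
phase, whose length is inversely proportional to the time scale of the slow variables, so the
picture reproduces itself for the next Boolean state.
-/

open Set Filter Topology

/-! ### Scalar differential inequalities -/

section Scalar

variable {u u' : ℝ → ℝ} {a b c r : ℝ}

lemma continuousOn_of_forall_hasDerivAt {s : Set ℝ} (hu : ∀ t ∈ s, HasDerivAt u (u' t) t) :
    ContinuousOn u s :=
  fun t ht => (hu t ht).continuousAt.continuousWithinAt

lemma le_of_deriv_neg_of_eq (hu : ∀ t ∈ Icc a b, HasDerivAt u (u' t) t) (ha : u a ≤ c)
    (hc : ∀ t ∈ Ico a b, u t = c → u' t < 0) : ∀ t ∈ Icc a b, u t ≤ c :=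
  image_le_of_deriv_right_lt_deriv_boundary' (continuousOn_of_forall_hasDerivAt hu)
    (fun t ht => (hu t (Ico_subset_Icc_self ht)).hasDerivWithinAt) ha continuousOn_const
    (fun _ _ => hasDerivWithinAt_const _ _ _) hc

lemma le_of_deriv_pos_of_eq (hu : ∀ t ∈ Icc a b, HasDerivAt u (u' t) t) (ha : c ≤ u a)
    (hc : ∀ t ∈ Ico a b, u t = c → 0 < u' t) : ∀ t ∈ Icc a b, c ≤ u t :=
  image_le_of_deriv_right_lt_deriv_boundary' continuousOn_const
    (fun _ _ => hasDerivWithinAt_const _ _ _) ha (continuousOn_of_forall_hasDerivAt hu)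
    (fun t ht => (hu t (Ico_subset_Icc_self ht)).hasDerivWithinAt)
    (fun t ht h => hc t ht h.symm)

lemma le_right_of_lt_deriv_of_le (hab : a ≤ b) (hr : 0 ≤ r)
    (hu : ∀ t ∈ Icc a b, HasDerivAt u (u' t) t) (ha : c - r * (b - a) ≤ u a)
    (hc : ∀ t ∈ Ico a b, u t ≤ c → r < u' t) : c ≤ u b := by
  have hline : ∀ t, HasDerivAt (fun t => c - r * (b - t)) r t := fun t => by
    simpa using (((hasDerivAt_id t).const_sub b).const_mul r).const_sub c
  have hle := image_le_of_deriv_right_lt_deriv_boundary'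
    (continuousOn_of_forall_hasDerivAt fun t _ => hline t)
    (fun t _ => (hline t).hasDerivWithinAt) ha (continuousOn_of_forall_hasDerivAt hu)
    (fun t ht => (hu t (Ico_subset_Icc_self ht)).hasDerivWithinAt)
    (fun t ht heq => hc t ht (heq ▸ by nlinarith [ht.2])) (right_mem_Icc.2 hab)
  simpa using hle

lemma exists_le_of_deriv_le_neg (hab : a ≤ b) (hu : ∀ t ∈ Icc a b, HasDerivAt u (u' t) t)
    (ha : u a - c ≤ r * (b - a)) (hc : ∀ t ∈ Icc a b, c < u t → u' t ≤ -r) :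
    ∃ t ∈ Icc a b, u t ≤ c := by
  by_contra! hlt
  have hline : ∀ t, HasDerivAt (fun t => u a - r * (t - a)) (-r) t := fun t => by
    simpa using (((hasDerivAt_id t).sub_const a).const_mul r).const_sub (u a)
  have hle := image_le_of_deriv_right_le_deriv_boundary (continuousOn_of_forall_hasDerivAt hu)
    (fun t ht => (hu t (Ico_subset_Icc_self ht)).hasDerivWithinAt) (by simp)
    (continuousOn_of_forall_hasDerivAt fun t _ => hline t)
    (fun t _ => (hline t).hasDerivWithinAt)
    (fun t ht => hc t (Ico_subset_Icc_self ht) (hlt t (Ico_subset_Icc_self ht)))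
    (right_mem_Icc.2 hab)
  linarith [hlt b (right_mem_Icc.2 hab)]

lemma exists_first_eq {ι : Type*} [Finite ι] {v : ι → ℝ → ℝ}
    (hv : ∀ j, ContinuousOn (v j) (Icc a b)) (ha : ∀ j, c < v j a)
    (hb : ∃ t ∈ Icc a b, ∃ j, v j t ≤ c) :
    ∃ T ∈ Ioc a b, (∃ j, v j T = c) ∧ ∀ t ∈ Icc a T, ∀ j, c ≤ v j t := by
  have hclosed : IsClosed (⋃ j, Icc a b ∩ v j ⁻¹' Iic c) :=
    isClosed_iUnion_of_finite fun j =>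
      (hv j).preimage_isClosed_of_isClosed isClosed_Icc isClosed_Iic
  obtain ⟨T, hT, hleast⟩ : ∃ T, IsLeast (⋃ j, Icc a b ∩ v j ⁻¹' Iic c) T := by
    obtain ⟨t, ht, j, hj⟩ := hb
    exact (isCompact_Icc.of_isClosed_subset hclosed
      (iUnion_subset fun j => inter_subset_left)).exists_isLeast ⟨t, mem_iUnion.2 ⟨j, ht, hj⟩⟩
  obtain ⟨j, hTab, hjT : v j T ≤ c⟩ := mem_iUnion.1 hT
  have haT : a < T := hTab.1.lt_of_ne fun h => (ha j).not_ge (h ▸ hjT)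
  have hbefore : ∀ t ∈ Ico a T, ∀ k, c ≤ v k t := fun t ht k => by
    by_contra! hlt
    exact ht.2.not_ge (hleast (mem_iUnion.2 ⟨k, ⟨ht.1, ht.2.le.trans hTab.2⟩, hlt.le⟩))
  have hupto : ∀ t ∈ Icc a T, ∀ k, c ≤ v k t := fun t ht k => by
    rw [← closure_Ico haT.ne] at ht
    refine le_on_closure (fun t ht => hbefore t ht k) continuousOn_const ?_ ht
    rw [closure_Ico haT.ne]
    exact (hv k).mono (Icc_subset_Icc_right hTab.2)
  exact ⟨T, ⟨haT, hTab.2⟩, ⟨j, hjT.antisymm (hupto T (right_mem_Icc.2 haT.le) j)⟩, hupto⟩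

lemma exists_sign_change_of_strictAntiOn (hab : a ≤ b) (hcont : ContinuousOn u (Icc a b))
    (hanti : StrictAntiOn u (Icc a b)) (ha : 0 < u a) (hb : u b < 0) :
    ∃ z ∈ Ioo a b, (∀ t ∈ Ico a z, 0 < u t) ∧ ∀ t ∈ Ioc z b, u t < 0 := by
  obtain ⟨z, hz, hz0⟩ := intermediate_value_Ioo' hab hcont ⟨hb, ha⟩
  have hzI := Ioo_subset_Icc_self hz
  refine ⟨z, hz, fun t ht => ?_, fun t ht => ?_⟩
  · exact hz0 ▸ hanti ⟨ht.1, ht.2.le.trans hz.2.le⟩ hzI ht.2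
  · exact hz0 ▸ hanti hzI ⟨hz.1.le.trans ht.1.le, ht.2⟩ ht.1

end Scalar

/-! ### The nonlinearities -/

/-- The odd part `3x - x³` of the cubic `g`, whose fold points are `±1`. -/
noncomputable def oddCubic (x : ℝ) : ℝ := 3 * x - x ^ 3

/-- The coupling `6 L(y) - 3`, which is an odd function of `y` with values in `[-3, 3]`. -/
noncomputable def oddRamp (y : ℝ) : ℝ := 6 * Lpl y - 3

lemma gcub_add_six_mul (x q : ℝ) : gcub x + 6 * q = oddCubic x + (6 * q - 3) := by
  unfold gcub oddCubic; ring

lemma oddCubic_neg (x : ℝ) : oddCubic (-x) = -oddCubic x := by unfold oddCubic; ring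

lemma oddRamp_neg (y : ℝ) : oddRamp (-y) = -oddRamp y := by
  unfold oddRamp Lpl; split_ifs <;> linarith

lemma abs_oddRamp_le (y : ℝ) : |oddRamp y| ≤ 3 := by
  rw [abs_le]; unfold oddRamp Lpl; split_ifs <;> constructor <;> linarith

lemma oddRamp_le {y c : ℝ} (hy : y ≤ c) (hc : -1 ≤ c) : oddRamp y ≤ 3 * c := by
  unfold oddRamp Lpl; split_ifs <;> linarith

lemma neg_two_lt_oddRamp {y : ℝ} (hy : -(2 / 3) < y) : -2 < oddRamp y := by
  unfold oddRamp Lpl; split_ifs <;> linarith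

lemma oddCubic_le_two {x : ℝ} (hx : -2 ≤ x) : oddCubic x ≤ 2 := by
  have hfactor : 2 - oddCubic x = (x - 1) ^ 2 * (x + 2) := by unfold oddCubic; ring
  nlinarith [mul_nonneg (sq_nonneg (x - 1)) (by linarith : 0 ≤ x + 2)]

lemma oddCubic_le_two_sub {x δ : ℝ} (hx : -1 ≤ x) (hxδ : x ≤ 1 - δ) (hδ : 0 < δ)
    (hδ' : δ ≤ 1 / 2) : oddCubic x ≤ 2 - 2 * δ ^ 2 := by
  have hmono : oddCubic x ≤ oddCubic (1 - δ) := by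
    have : 0 ≤ (1 - δ - x) * (3 - ((1 - δ) ^ 2 + (1 - δ) * x + x ^ 2)) :=
      mul_nonneg (by linarith) (by nlinarith)
    unfold oddCubic; linarith
  have hfold : oddCubic (1 - δ) ≤ 2 - 2 * δ ^ 2 := by
    unfold oddCubic; nlinarith [mul_nonneg (sq_nonneg δ) (by linarith : 0 ≤ 1 - δ)]
  exact hmono.trans hfold

lemma oddCubic_nonneg {x : ℝ} (h0 : 0 ≤ x) (h1 : x ≤ 1) : 0 ≤ oddCubic x := by
  have hfactor : oddCubic x = x * (3 - x ^ 2) := by unfold oddCubic; ring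
  rw [hfactor]
  exact mul_nonneg h0 (by nlinarith)

lemma abs_oddCubic_le {x : ℝ} (hx : |x| ≤ 3) : |oddCubic x| ≤ 18 := by
  have hfactor : oddCubic x = x * (3 - x ^ 2) := by unfold oddCubic; ring
  have hsq : x ^ 2 ≤ 3 ^ 2 := sq_le_sq' (abs_le.1 hx).1 (abs_le.1 hx).2
  have hcofactor : |3 - x ^ 2| ≤ 6 := abs_le.2 ⟨by linarith, by nlinarith [sq_nonneg x]⟩
  calc |oddCubic x| = |x| * |3 - x ^ 2| := by rw [hfactor, abs_mul]
    _ ≤ 3 * 6 := by gcongr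
    _ = 18 := by norm_num

lemma lt_neg_two_of_gcub_eq_zero {x : ℝ} (hx : gcub x = 0) : x < -2 := by
  by_contra! hge
  have : gcub x = oddCubic x - 3 := by unfold gcub oddCubic; ring
  linarith [oddCubic_le_two hge]

lemma abs_le_three_of_hasDerivAt {u w : ℝ → ℝ} {g : ℝ} (hg : 0 < g)
    (hu : ∀ t, 0 ≤ t → HasDerivAt u (g * (oddCubic (u t) + w t)) t)
    (hw : ∀ t, 0 ≤ t → |w t| ≤ 3) (h0 : |u 0| ≤ 3) {t : ℝ} (ht : 0 ≤ t) : |u t| ≤ 3 := by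
  refine abs_le.2 ⟨?_, ?_⟩
  · refine le_of_deriv_pos_of_eq (fun z hz => hu z hz.1) (abs_le.1 h0).1 (fun z hz heq => ?_) t
      (right_mem_Icc.2 ht)
    have hcubic : oddCubic (u z) = 18 := by rw [heq]; norm_num [oddCubic]
    exact mul_pos hg (by linarith [(abs_le.1 (hw z hz.1)).1])
  · refine le_of_deriv_neg_of_eq (fun z hz => hu z hz.1) (abs_le.1 h0).2 (fun z hz heq => ?_) t
      (right_mem_Icc.2 ht)
    have hcubic : oddCubic (u z) = -18 := by rw [heq]; norm_num [oddCubic]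
    exact mul_neg_of_pos_of_neg hg (by linarith [(abs_le.1 (hw z hz.1)).2])

/-! ### The fall from the fold -/

section Fall

variable {u w : ℝ → ℝ} {g δ τ T : ℝ}

lemma fall_rate_le {x p : ℝ} (hg : 0 < g) (hδ : 0 < δ) (hδ' : δ ≤ 1 / 2) (hp : p ≤ -2 + δ ^ 2)
    (hx : -1 ≤ x) (hxδ : x ≤ 1 - δ) : g * (oddCubic x + p) ≤ -(g * δ ^ 2) := by
  have : oddCubic x + p ≤ -δ ^ 2 := by linarith [oddCubic_le_two_sub hx hxδ hδ hδ']
  calc g * (oddCubic x + p) ≤ g * -δ ^ 2 := by gcongr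
    _ = -(g * δ ^ 2) := by ring

lemma le_one_sub_of_fall (hg : 0 < g) (hδ : 0 < δ) (hδ' : δ ≤ 1 / 2)
    (hu : ∀ t ∈ Icc T (T + τ), HasDerivAt u (g * (oddCubic (u t) + w t)) t)
    (hw : ∀ t ∈ Icc T (T + τ), w t ≤ -2 + δ ^ 2) (hT : u T = 1 - δ) :
    ∀ t ∈ Icc T (T + τ), u t ≤ 1 - δ :=
  le_of_deriv_neg_of_eq hu hT.le fun t ht heq =>
    (fall_rate_le hg hδ hδ' (hw t (Ico_subset_Icc_self ht)) (by linarith) heq.le).trans_lt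
      (neg_neg_of_pos (by positivity))

lemma exists_fall (hg : 0 < g) (hδ : 0 < δ) (hδ' : δ ≤ 1 / 2) (hτ : 2 ≤ g * δ ^ 2 * τ)
    (hu : ∀ t ∈ Icc T (T + τ), HasDerivAt u (g * (oddCubic (u t) + w t)) t)
    (hw : ∀ t ∈ Icc T (T + τ), w t ≤ -2 + δ ^ 2) (hT : u T = 1 - δ) :
    ∃ b c, T < b ∧ b < c ∧ c ≤ T + τ ∧ (∀ t ∈ Ico T b, 0 < u t) ∧ (∀ t ∈ Ioc b c, u t < 0) ∧
      u c = -1 := by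
  have hrate_pos : 0 < g * δ ^ 2 := by positivity
  have hτ_pos : 0 < τ := pos_of_mul_pos_right (by linarith) hrate_pos.le
  have hrate : ∀ t ∈ Icc T (T + τ), -1 ≤ u t →
      g * (oddCubic (u t) + w t) ≤ -(g * δ ^ 2) := fun t ht h =>
    fall_rate_le hg hδ hδ' (hw t ht) h (le_one_sub_of_fall hg hδ hδ' hu hw hT t ht)
  have hreach : ∃ t ∈ Icc T (T + τ), u t ≤ -1 :=
    exists_le_of_deriv_le_neg (by linarith) hu (by rw [add_sub_cancel_left]; linarith)
      fun t ht h => hrate t ht h.le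
  obtain ⟨c, hc, ⟨-, hcu⟩, hge⟩ := exists_first_eq (ι := Unit) (v := fun _ => u)
    (fun _ => continuousOn_of_forall_hasDerivAt hu) (c := -1) (fun _ => by linarith)
    (by simpa using hreach)
  have hsub : Icc T c ⊆ Icc T (T + τ) := Icc_subset_Icc_right hc.2
  have hcont : ContinuousOn u (Icc T c) := (continuousOn_of_forall_hasDerivAt hu).mono hsub
  have hanti : StrictAntiOn u (Icc T c) :=
    strictAntiOn_of_hasDerivWithinAt_neg (convex_Icc T c) hcont
      (fun t ht => (hu t (hsub (interior_subset ht))).hasDerivWithinAt) fun t ht =>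
        (hrate t (hsub (interior_subset ht)) (hge t (interior_subset ht) ())).trans_lt
          (neg_neg_of_pos hrate_pos)
  obtain ⟨b, hb, hpos, hneg⟩ := exists_sign_change_of_strictAntiOn hc.1.le hcont hanti
    (by linarith) (by linarith)
  exact ⟨b, c, hb.1, hb.2, hc.2, hpos, hneg, hcu⟩

end Fall

/-! ### Dynamics relative to the current Boolean state -/

section Aligned

variable {ι : Type*}

/-- The quantitative separation of time scales: `τ` bounds the duration of a fall, so that a slow
variable moves by at most `21 γ' τ` during a fall, and by at most `11/12` in a time `1 + 11 τ`. -/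
structure TimeScaleSeparation (γ γ' : ι → ℝ) (δ τ : ℝ) : Prop where
  fast_pos : ∀ j, 0 < γ j
  slow_pos : ∀ j, 0 < γ' j
  margin_pos : 0 < δ
  margin_le : δ ≤ 1 / 2
  time_pos : 0 < τ
  fall : ∀ j, 2 ≤ γ j * δ ^ 2 * τ
  loss_le : ∀ j, 21 * γ' j * τ ≤ δ ^ 2 / 3
  recovery : ∀ j, 21 * γ' j * (1 + 11 * τ) ≤ 11 / 12

lemma exists_timeScaleSeparation [Finite ι] {γ : ι → ℝ} (hγ : ∀ j, 0 < γ j) {δ : ℝ} (hδ : 0 < δ)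
    (hδ' : δ ≤ 1 / 2) :
    ∃ μ > 0, ∃ τ, ∀ γ' : ι → ℝ, (∀ j, 0 < γ' j ∧ γ' j < μ) → TimeScaleSeparation γ γ' δ τ := by
  obtain ⟨M, hM⟩ := Finite.exists_le fun j => 2 / (γ j * δ ^ 2)
  set τ := max M 1
  have hτ : 1 ≤ τ := le_max_right M 1
  refine ⟨δ ^ 2 / (1000 * τ), by positivity, τ, fun γ' hγ' => ?_⟩
  have hsmall : ∀ j, 1000 * (γ' j * τ) ≤ δ ^ 2 := fun j => by
    have := (lt_div_iff₀ (by positivity)).1 (hγ' j).2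
    linarith
  refine ⟨hγ, fun j => (hγ' j).1, hδ, hδ', by positivity, fun j => ?_, fun j => ?_, fun j => ?_⟩
  · rw [← div_le_iff₀' (by have := hγ j; positivity)]
    exact (hM j).trans (le_max_left M 1)
  · nlinarith [hsmall j]
  · nlinarith [hsmall j, mul_le_mul_of_nonneg_left hτ (hγ' j).1.le]

namespace TimeScaleSeparation

variable {γ γ' : ι → ℝ} {δ τ : ℝ}

lemma loss_nonneg (hsep : TimeScaleSeparation γ γ' δ τ) (j : ι) : 0 ≤ 21 * γ' j * τ := by
  have := hsep.slow_pos j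
  have := hsep.time_pos
  positivity

lemma loss_le_one_div_twelve (hsep : TimeScaleSeparation γ γ' δ τ) (j : ι) :
    21 * γ' j * τ ≤ 1 / 12 := by
  nlinarith [hsep.loss_le j, hsep.margin_pos, hsep.margin_le]

end TimeScaleSeparation

/-- A solution of the system written in coordinates in which the current Boolean state is all
positive. The coordinates in `F` are those that the Boolean map wants to flip, and the forcing `P`
of the slow variables is only controlled while all fast variables are at least `1 - δ`. -/
structure AlignedSolution (γ γ' : ι → ℝ) (δ : ℝ) (F : Set ι) (X Y P : ℝ → ι → ℝ) : Prop where
  fast : ∀ t, 0 ≤ t → ∀ j, HasDerivAt (X · j) (γ j * (oddCubic (X t j) + oddRamp (Y t j))) t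
  slow : ∀ t, 0 ≤ t → ∀ j, HasDerivAt (Y · j) (γ' j * (oddCubic (Y t j) + P t j)) t
  abs_fast_le : ∀ t, 0 ≤ t → ∀ j, |X t j| ≤ 3
  abs_slow_le : ∀ t, 0 ≤ t → ∀ j, |Y t j| ≤ 3
  abs_forcing_le : ∀ t, 0 ≤ t → ∀ j, |P t j| ≤ 3
  forcing_le : ∀ t, 0 ≤ t → (∀ j, 1 - δ ≤ X t j) → ∀ j ∈ F, P t j ≤ -(5 / 2)
  le_forcing : ∀ t, 0 ≤ t → (∀ j, 1 - δ ≤ X t j) → ∀ j ∉ F, 5 / 2 ≤ P t j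

/-- On `[a, b]` all fast variables stay above the margin, so that the forcing is controlled. -/
def IsSlowPhase (δ : ℝ) (X : ℝ → ι → ℝ) (a b : ℝ) : Prop :=
  ∀ t ∈ Icc a b, ∀ j, 1 - δ ≤ X t j

/-- The configuration from which a Boolean step starts. The slow variables may miss the level `1/3`
by the amount that they can lose during a fall of duration `τ`. -/
def IsReady (γ' : ι → ℝ) (τ : ℝ) (X Y : ι → ℝ) : Prop :=
  ∀ j, 1 ≤ X j ∧ 1 / 3 - 21 * γ' j * τ ≤ Y j

/-- Change the sign of coordinate `i`. -/
def flipCoord [DecidableEq ι] (i : ι) (v : ι → ℝ) : ι → ℝ :=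
  Function.update v i (-v i)

/-- The property `p` holds from time `a` until just before `b`, and `q` from just after `b` until
`c`. The gap `a + 1 ≤ c` prevents switching times from accumulating. -/
structure SwitchesAt (p q : ℝ → Prop) (a b c : ℝ) : Prop where
  lt_switch : a < b
  switch_lt : b < c
  add_one_le : a + 1 ≤ c
  before : ∀ t ∈ Ico a b, p t
  after : ∀ t ∈ Ioc b c, q t

lemma forall_flipCoord_iff [DecidableEq ι] {i : ι} {p : ι → ℝ → Prop} {v : ι → ℝ} :
    (∀ j, p j (flipCoord i v j)) ↔ p i (-v i) ∧ ∀ j, j ≠ i → p j (v j) := by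
  constructor
  · refine fun h => ⟨by simpa [flipCoord] using h i, fun j hj => ?_⟩
    simpa [flipCoord, hj] using h j
  · rintro ⟨hi, hne⟩ j
    rcases eq_or_ne j i with rfl | hj
    · simpa [flipCoord] using hi
    · simpa [flipCoord, hj] using hne j hj

namespace AlignedSolution

variable {γ γ' : ι → ℝ} {δ τ : ℝ} {F : Set ι} {X Y P : ℝ → ι → ℝ} {a b m : ℝ} {i j : ι}

lemma abs_slow_sub_le (h : AlignedSolution γ γ' δ F X Y P) (ha : 0 ≤ a) (hab : a ≤ b)
    (hγ' : 0 < γ' j) : |Y b j - Y a j| ≤ 21 * γ' j * (b - a) := by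
  have hbound : ∀ t ∈ Icc a b, ‖γ' j * (oddCubic (Y t j) + P t j)‖ ≤ 21 * γ' j := fun t ht => by
    have ht0 := ha.trans ht.1
    have := (abs_add_le (oddCubic (Y t j)) (P t j)).trans
      (add_le_add (abs_oddCubic_le (h.abs_slow_le t ht0 j)) (h.abs_forcing_le t ht0 j))
    rw [Real.norm_eq_abs, abs_mul, abs_of_pos hγ']
    nlinarith
  have hmvt := (convex_Icc a b).norm_image_sub_le_of_norm_hasDerivWithin_le
    (fun t ht => (h.slow t (ha.trans ht.1) j).hasDerivWithinAt) hbound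
    (left_mem_Icc.2 hab) (right_mem_Icc.2 hab)
  simpa [abs_of_nonneg (sub_nonneg.2 hab)] using hmvt

lemma abs_slow_sub_le_loss (h : AlignedSolution γ γ' δ F X Y P) {t T : ℝ} (hT : 0 ≤ T)
    (ht : t ∈ Icc T (T + τ)) (hγ' : 0 < γ' j) : |Y t j - Y T j| ≤ 21 * γ' j * τ :=
  (h.abs_slow_sub_le hT ht.1 hγ').trans <|
    mul_le_mul_of_nonneg_left (by linarith [ht.2]) (by positivity)

lemma one_le_fast (h : AlignedSolution γ γ' δ F X Y P) (ha : 0 ≤ a) (hγ : 0 < γ j)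
    (hX : 1 ≤ X a j) (hY : ∀ t ∈ Ico a b, -(2 / 3) < Y t j) : ∀ t ∈ Icc a b, 1 ≤ X t j :=
  le_of_deriv_pos_of_eq (fun t ht => h.fast t (ha.trans ht.1) j) hX fun t ht heq => by
    have hcubic : oddCubic (X t j) = 2 := by rw [heq]; norm_num [oddCubic]
    exact mul_pos hγ (by linarith [neg_two_lt_oddRamp (hY t ht)])

lemma le_slow (h : AlignedSolution γ γ' δ F X Y P) (ha : 0 ≤ a) (hslow : IsSlowPhase δ X a b)
    (hj : j ∉ F) (hγ' : 0 < γ' j) (hm : m ∈ Icc 0 1) (hY : m ≤ Y a j) :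
    ∀ t ∈ Icc a b, m ≤ Y t j :=
  le_of_deriv_pos_of_eq (fun t ht => h.slow t (ha.trans ht.1) j) hY fun t ht heq => by
    have hP := h.le_forcing t (ha.trans ht.1) (hslow t (Ico_subset_Icc_self ht)) j hj
    exact mul_pos hγ' (by linarith [heq ▸ oddCubic_nonneg hm.1 hm.2])

lemma slow_le (h : AlignedSolution γ γ' δ F X Y P) (ha : 0 ≤ a) (hslow : IsSlowPhase δ X a b)
    (hi : i ∈ F) (hγ' : 0 < γ' i) (hm : -2 ≤ m) (hY : Y a i ≤ m) : ∀ t ∈ Icc a b, Y t i ≤ m :=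
  le_of_deriv_neg_of_eq (fun t ht => h.slow t (ha.trans ht.1) i) hY fun t ht heq => by
    have hP := h.forcing_le t (ha.trans ht.1) (hslow t (Ico_subset_Icc_self ht)) i hi
    exact mul_neg_of_pos_of_neg hγ' (by linarith [heq ▸ oddCubic_le_two hm])

lemma slow_recovers (h : AlignedSolution γ γ' δ F X Y P) (ha : 0 ≤ a) (hab : a ≤ b)
    (hslow : IsSlowPhase δ X a b) (hj : j ∉ F) (hγ' : 0 < γ' j) (h0 : 0 ≤ Y a j) (hm : m ≤ 1)
    (hY : m - 2 * γ' j * (b - a) ≤ Y a j) : m ≤ Y b j :=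
  le_right_of_lt_deriv_of_le hab (by positivity) (fun t ht => h.slow t (ha.trans ht.1) j) hY
    fun t ht hle => by
      have hP := h.le_forcing t (ha.trans ht.1) (hslow t (Ico_subset_Icc_self ht)) j hj
      have hnonneg := h.le_slow ha hslow hj hγ' (by simp) h0 t (Ico_subset_Icc_self ht)
      nlinarith [oddCubic_nonneg hnonneg (hle.trans hm)]

lemma isReady_coord_of_isSlowPhase (h : AlignedSolution γ γ' δ F X Y P)
    (hsep : TimeScaleSeparation γ γ' δ τ) (ha : 0 ≤ a) (hready : IsReady γ' τ (X a) (Y a))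
    (hslow : IsSlowPhase δ X a b) (hj : j ∉ F) :
    ∀ t ∈ Icc a b, 1 ≤ X t j ∧ 1 / 3 - 21 * γ' j * τ ≤ Y t j := by
  have hloss := hsep.loss_le_one_div_twelve j
  have hY := h.le_slow ha hslow hj (hsep.slow_pos j)
    ⟨by linarith, by linarith [hsep.loss_nonneg j]⟩ (hready j).2
  have hX := h.one_le_fast ha (hsep.fast_pos j) (hready j).1 fun t ht => by
    linarith [hY t (Ico_subset_Icc_self ht)]
  exact fun t ht => ⟨hX t ht, hY t ht⟩

lemma exists_slow_le_neg_one (h : AlignedSolution γ γ' δ F X Y P) (ha : 0 ≤ a)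
    (hslow : ∀ b, IsSlowPhase δ X a b) (hi : i ∈ F) (hγ' : 0 < γ' i) :
    ∃ t, a ≤ t ∧ Y t i ≤ -1 := by
  obtain ⟨t, ht, hY⟩ := exists_le_of_deriv_le_neg (a := a) (b := a + 8 / γ' i) (c := -1)
    (r := γ' i / 2) (le_add_of_nonneg_right (by positivity))
    (fun t ht => h.slow t (ha.trans ht.1) i)
    (by
      have hcancel : γ' i / 2 * (a + 8 / γ' i - a) = 4 := by field_simp; norm_num
      linarith [(abs_le.1 (h.abs_slow_le a ha i)).2])
    fun t ht hgt => by
      nlinarith [oddCubic_le_two (by linarith : -2 ≤ Y t i),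
        h.forcing_le t (ha.trans ht.1) (hslow _ t ht) i hi]
  exact ⟨t, ht.1, hY⟩

lemma exists_fast_lt_margin (h : AlignedSolution γ γ' δ F X Y P) (ha : 0 ≤ a) (hδ : δ < 1)
    (hi : i ∈ F) (hγ : 0 < γ i) (hγ' : 0 < γ' i) : ∃ t, a ≤ t ∧ ∃ j, X t j < 1 - δ := by
  by_contra! hstay
  have hslow : ∀ b, IsSlowPhase δ X a b := fun b t ht => hstay t ht.1
  obtain ⟨z, haz, hYz⟩ := h.exists_slow_le_neg_one ha hslow hi hγ'
  have hz := ha.trans haz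
  obtain ⟨t, ht, hX⟩ := exists_le_of_deriv_le_neg (a := z) (b := z + 3 / γ i) (c := 0)
    (r := γ i) (le_add_of_nonneg_right (by positivity)) (fun t ht => h.fast t (hz.trans ht.1) i)
    (by
      have hcancel : γ i * (z + 3 / γ i - z) = 3 := by field_simp; ring
      linarith [(abs_le.1 (h.abs_fast_le z hz i)).2])
    fun t ht hgt => by
      have hY := h.slow_le hz (fun t ht => hstay t (haz.trans ht.1)) hi hγ' (by norm_num) hYz t ht
      nlinarith [oddCubic_le_two (by linarith : -2 ≤ X t i), oddRamp_le hY le_rfl]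
  linarith [hstay t (haz.trans ht.1) i]

lemma exists_isSlowPhase_end [Finite ι] (h : AlignedSolution γ γ' δ F X Y P)
    (hsep : TimeScaleSeparation γ γ' δ τ) (ha : 0 ≤ a) (hready : IsReady γ' τ (X a) (Y a))
    (hexit : ∃ t, a ≤ t ∧ ∃ j, X t j < 1 - δ) :
    ∃ T > a, (∃ i ∈ F, X T i = 1 - δ) ∧ IsSlowPhase δ X a T := by
  obtain ⟨t, hat, j, hj⟩ := hexit
  have hδ := hsep.margin_pos
  obtain ⟨T, hT, ⟨i, hi⟩, hslow⟩ := exists_first_eq (v := fun j t => X t j) (c := 1 - δ)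
    (fun j => continuousOn_of_forall_hasDerivAt fun t ht => h.fast t (ha.trans ht.1) j)
    (fun j => by linarith [(hready j).1]) ⟨t, right_mem_Icc.2 hat, j, hj.le⟩
  refine ⟨T, hT.1, ⟨i, ?_, hi⟩, hslow⟩
  by_contra hiF
  linarith [(h.isReady_coord_of_isSlowPhase hsep ha hready hslow hiF T (right_mem_Icc.2 hT.1.le)).1]

lemma isReady_of_empty [Finite ι] (h : AlignedSolution γ γ' δ ∅ X Y P)
    (hsep : TimeScaleSeparation γ γ' δ τ) (ha : 0 ≤ a) (hready : IsReady γ' τ (X a) (Y a))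
    (hab : a ≤ b) : IsReady γ' τ (X b) (Y b) := by
  have hslow : IsSlowPhase δ X a b := fun t ht j => by
    by_contra! hlt
    obtain ⟨T, -, ⟨i, hi, -⟩, -⟩ := h.exists_isSlowPhase_end hsep ha hready ⟨t, ht.1, j, hlt⟩
    exact hi
  exact fun j => h.isReady_coord_of_isSlowPhase hsep ha hready hslow (notMem_empty j) b
    (right_mem_Icc.2 hab)

lemma slow_le_of_isSlowPhase_end (h : AlignedSolution γ γ' δ F X Y P) (ha : 0 ≤ a) (hab : a ≤ b)
    (hγ : 0 < γ i) (hγ' : 0 < γ' i) (hslow : IsSlowPhase δ X a b) (hi : i ∈ F) (hXa : 1 ≤ X a i)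
    (hXb : X b i < 1) : Y b i ≤ -(2 / 3) := by
  by_contra! hYb
  have hY : ∀ t ∈ Ico a b, -(2 / 3) < Y t i := fun t ht => by
    by_contra! hle
    exact hYb.not_ge (h.slow_le (ha.trans ht.1) (fun z hz => hslow z ⟨ht.1.trans hz.1, hz.2⟩) hi
      hγ' (by norm_num) hle b (right_mem_Icc.2 ht.2.le))
  exact hXb.not_ge (h.one_le_fast ha hγ hXa hY b (right_mem_Icc.2 hab))

lemma exists_fall_of_isSlowPhase_end (h : AlignedSolution γ γ' δ F X Y P)
    (hsep : TimeScaleSeparation γ γ' δ τ) {T : ℝ} (hT : 0 ≤ T) (hX : X T i = 1 - δ)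
    (hY : Y T i ≤ -(2 / 3)) :
    ∃ b c, T < b ∧ b < c ∧ c ≤ T + τ ∧ (∀ t ∈ Ico T b, 0 < X t i) ∧ (∀ t ∈ Ioc b c, X t i < 0) ∧
      X c i = -1 := by
  refine exists_fall (hsep.fast_pos i) hsep.margin_pos hsep.margin_le (hsep.fall i)
    (fun t ht => h.fast t (hT.trans ht.1) i) (fun t ht => ?_) hX
  have hYt : Y t i ≤ -(2 / 3) + δ ^ 2 / 3 := by
    linarith [(abs_le.1 (h.abs_slow_sub_le_loss hT ht (hsep.slow_pos i))).2, hsep.loss_le i]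
  linarith [oddRamp_le hYt (by nlinarith [sq_nonneg δ])]

lemma one_add_le_of_isSlowPhase_end (h : AlignedSolution γ γ' δ F X Y P)
    (hsep : TimeScaleSeparation γ γ' δ τ) (ha : 0 ≤ a) (hab : a ≤ b)
    (hready : IsReady γ' τ (X a) (Y a)) (hY : Y b i ≤ -(2 / 3)) : 1 + 11 * τ ≤ b - a := by
  have hdrop : 11 / 12 ≤ 21 * γ' i * (b - a) := by
    linarith [(abs_le.1 (h.abs_slow_sub_le ha hab (hsep.slow_pos i))).1, (hready i).2,
      hsep.loss_le_one_div_twelve i]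
  have hrate : 0 < 21 * γ' i := by linarith [hsep.slow_pos i]
  exact le_of_mul_le_mul_left ((hsep.recovery i).trans hdrop) hrate

lemma slow_recovers_loss (h : AlignedSolution γ γ' δ F X Y P)
    (hsep : TimeScaleSeparation γ γ' δ τ) (ha : 0 ≤ a) (hready : IsReady γ' τ (X a) (Y a))
    (hslow : IsSlowPhase δ X a b) (hj : j ∉ F) (hlong : 1 + 11 * τ ≤ b - a) : 1 / 3 ≤ Y b j := by
  have hτ := hsep.time_pos
  refine h.slow_recovers ha (by linarith) hslow hj (hsep.slow_pos j) ?_ (by norm_num) ?_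
  · linarith [(hready j).2, hsep.loss_le_one_div_twelve j]
  · nlinarith [(hready j).2, mul_le_mul_of_nonneg_left hlong (hsep.slow_pos j).le,
      hsep.slow_pos j]

lemma isReady_coord_of_fall (h : AlignedSolution γ γ' δ F X Y P)
    (hsep : TimeScaleSeparation γ γ' δ τ) {T : ℝ} (hT : 0 ≤ T) (hX : 1 ≤ X T j)
    (hY : 1 / 3 ≤ Y T j) :
    ∀ t ∈ Icc T (T + τ), 1 ≤ X t j ∧ 1 / 3 - 21 * γ' j * τ ≤ Y t j := by
  have hYt : ∀ t ∈ Icc T (T + τ), 1 / 3 - 21 * γ' j * τ ≤ Y t j := fun t ht => by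
    linarith [(abs_le.1 (h.abs_slow_sub_le_loss hT ht (hsep.slow_pos j))).1]
  have hXt := h.one_le_fast hT (hsep.fast_pos j) hX fun t ht => by
    linarith [hYt t (Ico_subset_Icc_self ht), hsep.loss_le_one_div_twelve j]
  exact fun t ht => ⟨hXt t ht, hYt t ht⟩

lemma isReady_flipCoord_of_fall [DecidableEq ι] (h : AlignedSolution γ γ' δ F X Y P)
    (hsep : TimeScaleSeparation γ γ' δ τ) {c T : ℝ} (hT : 0 ≤ T) (hc : c ∈ Icc T (T + τ))
    (hXc : X c i = -1) (hYT : Y T i ≤ -(2 / 3))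
    (hne : ∀ j, j ≠ i → 1 ≤ X c j ∧ 1 / 3 - 21 * γ' j * τ ≤ Y c j) :
    IsReady γ' τ (flipCoord i (X c)) (flipCoord i (Y c)) := by
  have hX := forall_flipCoord_iff (p := fun _ x => 1 ≤ x).2
    ⟨by linarith, fun j hj => (hne j hj).1⟩
  have hY := forall_flipCoord_iff (p := fun j y => 1 / 3 - 21 * γ' j * τ ≤ y) (v := Y c) (i := i).2
    ⟨by linarith [(abs_le.1 (h.abs_slow_sub_le_loss hT hc (hsep.slow_pos i))).2,
      hsep.loss_le_one_div_twelve i, hsep.loss_nonneg i], fun j hj => (hne j hj).2⟩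
  exact fun j => ⟨hX j, hY j⟩

lemma exists_switch [Finite ι] [DecidableEq ι] (h : AlignedSolution γ γ' δ {i} X Y P)
    (hsep : TimeScaleSeparation γ γ' δ τ) (ha : 0 ≤ a) (hready : IsReady γ' τ (X a) (Y a)) :
    ∃ b c, SwitchesAt (fun t => ∀ j, 0 < X t j) (fun t => ∀ j, 0 < flipCoord i (X t) j) a b c ∧
      IsReady γ' τ (flipCoord i (X c)) (flipCoord i (Y c)) := by
  have hδ := hsep.margin_pos
  have hδ' := hsep.margin_le
  obtain ⟨T, haT, ⟨k, hk, hXT⟩, hslow⟩ := h.exists_isSlowPhase_end hsep ha hready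
    (h.exists_fast_lt_margin ha (by linarith) (mem_singleton i) (hsep.fast_pos i)
      (hsep.slow_pos i))
  rw [mem_singleton_iff.1 hk] at hXT
  have hT : 0 ≤ T := ha.trans haT.le
  have hYT : Y T i ≤ -(2 / 3) := h.slow_le_of_isSlowPhase_end ha haT.le (hsep.fast_pos i)
    (hsep.slow_pos i) hslow (mem_singleton i) (hready i).1 (by linarith)
  have hlong : 1 + 11 * τ ≤ T - a := h.one_add_le_of_isSlowPhase_end hsep ha haT.le hready hYT
  have hfall : ∀ j, j ≠ i → ∀ t ∈ Icc T (T + τ), 1 ≤ X t j ∧ 1 / 3 - 21 * γ' j * τ ≤ Y t j :=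
    fun j hj => h.isReady_coord_of_fall hsep hT
      (h.isReady_coord_of_isSlowPhase hsep ha hready hslow hj T (right_mem_Icc.2 haT.le)).1
      (h.slow_recovers_loss hsep ha hready hslow hj hlong)
  obtain ⟨b, c, hTb, hbc, hcτ, hpos, hneg, hXc⟩ :=
    h.exists_fall_of_isSlowPhase_end hsep hT hXT hYT
  refine ⟨b, c, ⟨haT.trans hTb, hbc, by linarith [hsep.time_pos], fun t ht j => ?_, fun t ht => ?_⟩,
    h.isReady_flipCoord_of_fall hsep hT ⟨by linarith, hcτ⟩ hXc hYT fun j hj =>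
      hfall j hj c ⟨by linarith, hcτ⟩⟩
  · rcases le_total t T with htT | hTt
    · linarith [hslow t ⟨ht.1, htT⟩ j]
    · rcases eq_or_ne j i with rfl | hj
      · exact hpos t ⟨hTt, ht.2⟩
      · linarith [(hfall j hj t ⟨hTt, by linarith [ht.2]⟩).1]
  · exact forall_flipCoord_iff (p := fun _ x => 0 < x).2 ⟨by linarith [hneg t ht], fun j hj => by
      linarith [(hfall j hj t ⟨by linarith [ht.1], by linarith [ht.2]⟩).1]⟩

end AlignedSolution

end Aligned

/-! ### Uniqueness of itineraries -/

section Uniqueness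

variable {α : Type*} {d : ℝ → α} {K K' : ℕ∞} {t t' : ℕ → ℝ} {σ σ' : ℕ → α} {k : ℕ}

/-- The part of the itinerary conditions that determines the itinerary: the discretized trajectory
`d` takes the value `σ k` on the `k`-th of the `K` open intervals delimited by `t`. -/
structure IsSwitchingSeq (d : ℝ → α) (K : ℕ∞) (t : ℕ → ℝ) (σ : ℕ → α) : Prop where
  one_le : 1 ≤ K
  zero : t 0 = 0
  lt_succ : ∀ k : ℕ, (k : ℕ∞) + 1 < K → t k < t (k + 1)
  eq_on : ∀ k : ℕ, (k : ℕ∞) < K → ∀ u, t k < u → ((k : ℕ∞) + 1 < K → u < t (k + 1)) → d u = σ k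
  ne : ∀ k : ℕ, (k : ℕ∞) + 1 < K → σ (k + 1) ≠ σ k
  stationary : ∀ k : ℕ, K ≤ (k : ℕ∞) + 1 → σ (k + 1) = σ k

namespace IsSwitchingSeq

lemma eventually_eq (h : IsSwitchingSeq d K t σ) (hk : (k : ℕ∞) < K) :
    ∀ᶠ u in 𝓝[>] t k, d u = σ k := by
  by_cases hk' : (k : ℕ∞) + 1 < K
  · filter_upwards [Ioo_mem_nhdsGT (h.lt_succ k hk')] with u hu
    exact h.eq_on k hk u hu.1 fun _ => hu.2
  · filter_upwards [self_mem_nhdsWithin] with u hu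
    exact h.eq_on k hk u hu fun hlt => absurd hlt hk'

lemma isGLB_exit (h : IsSwitchingSeq d K t σ) (hk : (k : ℕ∞) + 1 < K) :
    IsGLB {u | t k < u ∧ d u ≠ σ k} (t (k + 1)) := by
  refine ⟨fun u hu => ?_, fun l hl => ?_⟩
  · by_contra! hlt
    exact hu.2 (h.eq_on k (le_self_add.trans_lt hk) u hu.1 fun _ => hlt)
  · by_contra! hlt
    obtain ⟨u, hdu, hu⟩ := ((h.eventually_eq (k := k + 1) (by exact_mod_cast hk)).and
      (Ioo_mem_nhdsGT hlt)).exists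
    exact hu.2.not_ge (hl ⟨(h.lt_succ k hk).trans hu.1, hdu ▸ h.ne k hk⟩)

lemma exit_eq_empty (h : IsSwitchingSeq d K t σ) (hk : (k : ℕ∞) < K)
    (hlast : ¬(k : ℕ∞) + 1 < K) : {u | t k < u ∧ d u ≠ σ k} = ∅ :=
  eq_empty_of_forall_notMem fun u hu =>
    hu.2 (h.eq_on k hk u hu.1 fun hlt => absurd hlt hlast)

lemma value_eq (h : IsSwitchingSeq d K t σ) (h' : IsSwitchingSeq d K' t' σ')
    (hk : (k : ℕ∞) < K) (hk' : (k : ℕ∞) < K') (ht : t k = t' k) : σ k = σ' k := by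
  obtain ⟨u, hu, hu'⟩ := ((h.eventually_eq hk).and (ht ▸ h'.eventually_eq hk')).exists
  exact hu.symm.trans hu'

lemma lt_and_time_eq_and_value_eq (h : IsSwitchingSeq d K t σ) (h' : IsSwitchingSeq d K' t' σ')
    (hk : (k : ℕ∞) < K) : (k : ℕ∞) < K' ∧ t k = t' k ∧ σ k = σ' k := by
  induction k with
  | zero =>
    have hk' : ((0 : ℕ) : ℕ∞) < K' := zero_lt_one.trans_le h'.one_le
    have ht : t 0 = t' 0 := h.zero.trans h'.zero.symm
    exact ⟨hk', ht, h.value_eq h' hk hk' ht⟩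
  | succ k ih =>
    have hk1 : (k : ℕ∞) + 1 < K := by exact_mod_cast hk
    obtain ⟨hk', ht, hσ⟩ := ih (le_self_add.trans_lt hk1)
    have hglb := h.isGLB_exit hk1
    rw [ht, hσ] at hglb
    have hk1' : (k : ℕ∞) + 1 < K' := by
      by_contra hlast
      exact hglb.nonempty.ne_empty (h'.exit_eq_empty hk' hlast)
    have ht1 : t (k + 1) = t' (k + 1) := hglb.unique (h'.isGLB_exit hk1')
    have hk1'' : ((k + 1 : ℕ) : ℕ∞) < K' := by exact_mod_cast hk1'
    exact ⟨hk1'', ht1, h.value_eq h' hk hk1'' ht1⟩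

lemma unique (h : IsSwitchingSeq d K t σ) (h' : IsSwitchingSeq d K' t' σ') : σ = σ' := by
  funext k
  induction k with
  | zero => exact (h.lt_and_time_eq_and_value_eq h' (zero_lt_one.trans_le h.one_le)).2.2
  | succ k ih =>
    by_cases hk : ((k + 1 : ℕ) : ℕ∞) < K
    · exact (h.lt_and_time_eq_and_value_eq h' hk).2.2
    · have hk' : ¬((k + 1 : ℕ) : ℕ∞) < K' := fun hlt =>
        hk (h'.lt_and_time_eq_and_value_eq h hlt).1
      rw [h.stationary k (by exact_mod_cast not_lt.1 hk),
        h'.stationary k (by exact_mod_cast not_lt.1 hk'), ih]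

end IsSwitchingSeq

lemma IsItinerary.exists_isSwitchingSeq {P : Type*} {n : ℕ} {x : ℝ → P} {S : P → Fin n → Bool}
    {B : Set P} {σ : ℕ → Fin n → Bool} (h : IsItinerary n x S B σ) :
    ∃ K t, IsSwitchingSeq (fun u => S (x u)) K t σ := by
  obtain ⟨K, t, hK, h0, hlt, -, -, hS, hne, hstat⟩ := h
  exact ⟨K, t, hK, h0, hlt, fun k hk u hu => hS k hk u (Or.inl hu), hne, hstat⟩

lemma IsItinerary.unique {P : Type*} {n : ℕ} {x : ℝ → P} {S : P → Fin n → Bool} {B : Set P}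
    {σ σ' : ℕ → Fin n → Bool} (h : IsItinerary n x S B σ) (h' : IsItinerary n x S B σ') :
    σ = σ' := by
  obtain ⟨_, _, hseq⟩ := h.exists_isSwitchingSeq
  obtain ⟨_, _, hseq'⟩ := h'.exists_isSwitchingSeq
  exact hseq.unique hseq'

end Uniqueness

/-! ### Construction of itineraries -/

section Existence

lemma exists_enat_forall_lt_iff {p : ℕ → Prop} (hp : ∀ k, p (k + 1) → p k) :
    ∃ K : ℕ∞, ∀ k : ℕ, (k : ℕ∞) < K ↔ p k := by
  classical
  have hanti : Antitone p := antitone_nat_of_succ_le hp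
  by_cases h : ∃ k, ¬p k
  · refine ⟨Nat.find h, fun k => ?_⟩
    rw [Nat.cast_lt, Nat.lt_find_iff]
    simp only [not_not]
    exact ⟨fun hk => hk k le_rfl, fun hk m hm => hanti hm hk⟩
  · push Not at h
    exact ⟨⊤, fun k => iff_of_true (ENat.natCast_lt_top k) (h k)⟩

variable {P : Type*} {n : ℕ} {x : ℝ → P} {S : P → Fin n → Bool} {B : Set P}

/-- At time `u` the trajectory `x` is off the switching set `B` and has discretization `s`. -/
def IsAt (x : ℝ → P) (S : P → Fin n → Bool) (B : Set P) (s : Fin n → Bool) (u : ℝ) : Prop :=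
  S (x u) = s ∧ x u ∉ B

lemma notMem_of_strictMono_of_forall_isAt {σ : ℕ → Fin n → Bool} {t : ℕ → ℝ} (h0 : t 0 = 0)
    (hmono : StrictMono t) (htop : Tendsto t atTop atTop) (hstart : IsAt x S B (σ 0) 0)
    (hmid : ∀ k, ∀ u ∈ Ioo (t k) (t (k + 1)), IsAt x S B (σ k) u)
    (hlast : ∀ k, σ (k + 1) = σ k → ∀ u, t k < u → IsAt x S B (σ k) u) {u : ℝ} (hu : 0 ≤ u)
    (hne : ∀ k, σ (k + 1) ≠ σ k → u ≠ t (k + 1)) : x u ∉ B := by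
  have hmem : u ∈ ⋃ k, Ico (t k) (t (k + 1)) := by
    have hcover := iUnion_Ico_map_succ_eq_Ici (fun k => hmono.monotone bot_le)
      (not_bddAbove_of_tendsto_atTop htop)
    exact hcover.ge (show t 0 ≤ u from h0 ▸ hu)
  obtain ⟨k, hk⟩ := mem_iUnion.1 hmem
  rcases hk.1.lt_or_eq with hlt | heq
  · exact (hmid k u ⟨hlt, hk.2⟩).2
  · cases k with
    | zero => exact (h0 ▸ heq) ▸ hstart.2
    | succ k =>
      have hσ : σ (k + 1) = σ k := by
        by_contra hσ
        exact hne k hσ heq.symm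
      exact (hlast k hσ u (heq ▸ hmono k.lt_succ_self)).2

lemma isItinerary_of_strictMono {σ : ℕ → Fin n → Bool} {t : ℕ → ℝ} (h0 : t 0 = 0)
    (hmono : StrictMono t) (htop : Tendsto t atTop atTop) (hstart : IsAt x S B (σ 0) 0)
    (hmid : ∀ k, ∀ u ∈ Ioo (t k) (t (k + 1)), IsAt x S B (σ k) u)
    (hstat : ∀ k, σ (k + 1) = σ k → σ (k + 2) = σ (k + 1))
    (hlast : ∀ k, σ (k + 1) = σ k → ∀ u, t k < u → IsAt x S B (σ k) u) :
    IsItinerary n x S B σ := by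
  obtain ⟨K, hK⟩ := exists_enat_forall_lt_iff (p := fun k => σ (k + 1) ≠ σ k)
    fun k => mt (hstat k)
  have hK' : ∀ k : ℕ, (k : ℕ∞) + 1 < K + 1 ↔ σ (k + 1) ≠ σ k := fun k => by
    rw [← hK, ENat.add_lt_add_iff_right ENat.one_ne_top]
  refine ⟨K + 1, t, le_add_self, h0, fun k _ => hmono k.lt_succ_self, fun _ => htop,
    fun u hu hne => notMem_of_strictMono_of_forall_isAt h0 hmono htop hstart hmid hlast hu
      fun k hk => hne (k + 1) (by simp) (by exact_mod_cast (hK' k).2 hk), ?_,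
    fun k hk => (hK' k).1 hk, fun k hk => ?_⟩
  · rintro k - u (hlt | ⟨rfl, rfl⟩) hnext
    · by_cases hk : σ (k + 1) = σ k
      · exact (hlast k hk u hlt).1
      · exact (hmid k u ⟨hlt, hnext ((hK' k).2 hk)⟩).1
    · exact hstart.1
  · by_contra hσ
    exact hk.not_gt ((hK' k).2 hσ)

lemma exists_switchesAt_seq {α : Type*} {f : α → α} {G Start : α → ℝ → Prop} {s₀ : α}
    (h0 : Start s₀ 0)
    (hstep : ∀ s a, Start s a → ∃ b c, SwitchesAt (G s) (G (f s)) a b c ∧ Start (f s) c) :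
    ∃ a b : ℕ → ℝ, a 0 = 0 ∧ ∀ k, Start (f^[k] s₀) (a k) ∧
      SwitchesAt (G (f^[k] s₀)) (G (f^[k + 1] s₀)) (a k) (b k) (a (k + 1)) := by
  choose! b c hswitch hstart using hstep
  let a : ℕ → ℝ := fun k => Nat.rec 0 (fun k a => c (f^[k] s₀) a) k
  have ha : ∀ k, Start (f^[k] s₀) (a k) := fun k => by
    induction k with
    | zero => exact h0
    | succ k ih => rw [Function.iterate_succ_apply']; exact hstart _ _ ih
  refine ⟨a, fun k => b (f^[k] s₀) (a k), rfl, fun k => ⟨ha k, ?_⟩⟩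
  rw [Function.iterate_succ_apply']
  exact hswitch _ _ (ha k)

lemma natCast_le_of_switchesAt {p : ℕ → ℝ → Prop} {a b : ℕ → ℝ} (ha : a 0 = 0)
    (hswitch : ∀ k, SwitchesAt (p k) (p (k + 1)) (a k) (b k) (a (k + 1))) (k : ℕ) :
    (k : ℝ) ≤ a k := by
  induction k with
  | zero => simp [ha]
  | succ k ih => push_cast; linarith [(hswitch k).add_one_le]

lemma isItinerary_of_switchesAt {σ : ℕ → Fin n → Bool} {a b : ℕ → ℝ} (ha : a 0 = 0)
    (hswitch : ∀ k, SwitchesAt (IsAt x S B (σ k)) (IsAt x S B (σ (k + 1))) (a k) (b k) (a (k + 1)))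
    (hstat : ∀ k, σ (k + 1) = σ k → σ (k + 2) = σ (k + 1))
    (hlast : ∀ k, σ (k + 1) = σ k → ∀ u, a k ≤ u → IsAt x S B (σ k) u) :
    IsItinerary n x S B σ := by
  let t : ℕ → ℝ := fun k => Nat.casesOn k 0 b
  have hmono : StrictMono t := strictMono_nat_of_lt_succ fun k => by
    cases k with
    | zero => exact ha.symm.trans_lt (hswitch 0).lt_switch
    | succ k => exact (hswitch k).switch_lt.trans (hswitch (k + 1)).lt_switch
  have htop : Tendsto t atTop atTop := (tendsto_add_atTop_iff_nat 1).1 <|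
    tendsto_atTop_mono (fun k => (natCast_le_of_switchesAt ha hswitch k).trans
      (hswitch k).lt_switch.le) tendsto_natCast_atTop_atTop
  -- The interval after a switch consists of the end of that step and the start of the next one.
  have hjoin : ∀ k u, t k < u → (a k ≤ u → IsAt x S B (σ k) u) → IsAt x S B (σ k) u :=
    fun k u hu h => by
      rcases le_or_gt (a k) u with hau | hua
      · exact h hau
      · cases k with
        | zero => exact absurd (hu.trans hua) (by simp [t, ha])
        | succ k => exact (hswitch k).after u ⟨hu, hua.le⟩
  refine isItinerary_of_strictMono rfl hmono htop
    ((hswitch 0).before 0 ⟨ha.le, ha ▸ (hswitch 0).lt_switch⟩) (fun k u hu => ?_) hstat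
    fun k hk u hu => hjoin k u hu (hlast k hk u)
  exact hjoin k u hu.1 fun hau => (hswitch k).before u ⟨hau, hu.2⟩

lemma isItinerary_iterate {f : (Fin n → Bool) → Fin n → Bool} {Start : (Fin n → Bool) → ℝ → Prop}
    {s₀ : Fin n → Bool} (h0 : Start s₀ 0) (hat : ∀ s a, Start s a → IsAt x S B s a)
    (hfix : ∀ s a, f s = s → Start s a → ∀ u, a ≤ u → Start s u)
    (hstep : ∀ s a, f s ≠ s → Start s a →
      ∃ b c, SwitchesAt (IsAt x S B s) (IsAt x S B (f s)) a b c ∧ Start (f s) c) :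
    IsItinerary n x S B fun k => f^[k] s₀ := by
  have hstep' : ∀ s a, Start s a →
      ∃ b c, SwitchesAt (IsAt x S B s) (IsAt x S B (f s)) a b c ∧ Start (f s) c := fun s a ha => by
    by_cases hs : f s = s
    · have hstay := hfix s a hs ha
      refine ⟨a + 1, a + 2, ⟨by linarith, by linarith, by linarith,
        fun u hu => hat s u (hstay u hu.1), fun u hu => ?_⟩, ?_⟩
      · exact hs.symm ▸ hat s u (hstay u (by linarith [hu.1]))
      · exact hs.symm ▸ hstay (a + 2) (by linarith)
    · exact hstep s a hs ha
  obtain ⟨a, b, ha, hseq⟩ := exists_switchesAt_seq h0 hstep'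
  refine isItinerary_of_switchesAt ha (fun k => (hseq k).2) (fun k hk => ?_) fun k hk u hu => ?_
  · rw [Function.iterate_succ_apply' f (k + 1), hk, ← Function.iterate_succ_apply' f k, hk]
  · rw [Function.iterate_succ_apply'] at hk
    exact hat _ u (hfix _ _ hk (hseq k).1 u hu)

end Existence

/-! ### Alignment with a Boolean state -/

section Align

variable {ι : Type*} {s s' : ι → Bool} {v : ι → ℝ}

/-- The sign `±1` of a Boolean value. -/
def boolSign (b : Bool) : ℝ := if b then 1 else -1

/-- Coordinates relative to the Boolean state `s`, in which the orthant of `s` is positive. -/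
def align (s : ι → Bool) (v : ι → ℝ) : ι → ℝ := fun j => boolSign (s j) * v j

lemma boolSign_mul_self (b : Bool) : boolSign b * boolSign b = 1 := by cases b <;> simp [boolSign]

lemma abs_boolSign (b : Bool) : |boolSign b| = 1 := by cases b <;> simp [boolSign]

lemma oddCubic_boolSign_mul (b : Bool) (x : ℝ) :
    oddCubic (boolSign b * x) = boolSign b * oddCubic x := by
  cases b <;> simp [boolSign, oddCubic_neg]

lemma oddRamp_boolSign_mul (b : Bool) (y : ℝ) :
    oddRamp (boolSign b * y) = boolSign b * oddRamp y := by
  cases b <;> simp [boolSign, oddRamp_neg]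

lemma abs_align (s : ι → Bool) (v : ι → ℝ) (j : ι) : |align s v j| = |v j| := by
  rw [align, abs_mul, abs_boolSign, one_mul]

lemma align_align (s : ι → Bool) (v : ι → ℝ) : align s (align s v) = v := by
  funext j
  rw [align, align, ← mul_assoc, boolSign_mul_self, one_mul]

lemma align_eq_flipCoord [DecidableEq ι] {i : ι} (h : {j | s' j ≠ s j} = {i}) (v : ι → ℝ) :
    align s' v = flipCoord i (align s v) := by
  have hiff : ∀ j, s' j ≠ s j ↔ j = i := fun j => Set.ext_iff.1 h j
  funext j
  rcases eq_or_ne j i with rfl | hj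
  · have hnot : s' j = !s j := Bool.eq_not.2 ((hiff j).2 rfl)
    cases hs : s j <;> simp [align, flipCoord, hnot, hs, boolSign]
  · have heq : s' j = s j := not_not.1 ((hiff j).not.2 hj)
    simp [align, flipCoord, hj, heq]

lemma mem_Wset_iff {n : ℕ} {s : Fin n → Bool} {v : Fin n → ℝ} :
    v ∈ Wset n s ↔ ∀ j, 1 < align s v j := by
  refine forall_congr' fun j => ?_
  cases hs : s j <;> simp [align, boolSign, hs, lt_neg]

lemma isAt_of_align_pos {n : ℕ} {s : Fin n → Bool} {x : ℝ → Fin n → ℝ} {u : ℝ}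
    (h : ∀ j, 0 < align s (x u) j) : IsAt x (Sdisc n) (Bzero n) s u := by
  refine ⟨funext fun j => ?_, ?_⟩
  · have hj := h j
    cases hs : s j <;> simp_all [align, boolSign, Sdisc, le_of_lt]
  · rintro ⟨j, hj⟩
    simpa [align, hj] using h j

end Align

/-! ### Solutions of the system -/

section System

variable {n : ℕ} {f : (Fin n → Bool) → Fin n → Bool} {Q : (Fin n → ℝ) → Fin n → ℝ}
  {γ γ' : Fin n → ℝ} {δ τ : ℝ} {x y : ℝ → Fin n → ℝ}

/-- `Q` is within `1/12` of its Boolean value up to distance `δ` inside the thresholds `±1`. -/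
def IsConversionMargin (f : (Fin n → Bool) → Fin n → Bool) (Q : (Fin n → ℝ) → Fin n → ℝ)
    (δ : ℝ) : Prop :=
  ∀ s v, (∀ j, |v j| ≤ 3) → (∀ j, 1 - δ ≤ align s v j) →
    ∀ i, |Q v i - if f s i then 1 else 0| ≤ 1 / 12

lemma IsConversion.exists_isConversionMargin (hQ : IsConversion n f Q) :
    ∃ δ, 0 < δ ∧ δ ≤ 1 / 2 ∧ IsConversionMargin f Q δ := by
  obtain ⟨hcont, -, hvalue⟩ := hQ
  have hunif := (isCompact_closedBall (0 : Fin n → ℝ) 4).uniformContinuousOn_of_continuous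
    hcont.continuousOn
  obtain ⟨d, hd, hclose⟩ := Metric.uniformContinuousOn_iff.1 hunif (1 / 12) (by norm_num)
  set δ := min (1 / 2) (d / 4)
  have hδ : 0 < δ := by positivity
  have hδ' : δ ≤ 1 / 2 := min_le_left _ _
  have hδd : δ ≤ d / 4 := min_le_right _ _
  refine ⟨δ, hδ, hδ', fun s v hv hmargin i => ?_⟩
  set z : Fin n → ℝ := v + align s fun _ => 2 * δ
  have hshift : ∀ j, |align s (fun _ => 2 * δ) j| = 2 * δ := fun j => by
    rw [abs_align, abs_of_pos (by positivity)]
  have hz : z ∈ Wset n s := mem_Wset_iff.2 fun j => by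
    have : align s z j = align s v j + 2 * δ := by
      rw [← congrFun (align_align s fun _ => 2 * δ) j]
      exact mul_add _ _ _
    linarith [hmargin j]
  have hv4 : v ∈ Metric.closedBall 0 4 := by
    rw [mem_closedBall_zero_iff, pi_norm_le_iff_of_nonneg (by norm_num)]
    exact fun j => (hv j).trans (by norm_num)
  have hz4 : z ∈ Metric.closedBall 0 4 := by
    rw [mem_closedBall_zero_iff, pi_norm_le_iff_of_nonneg (by norm_num)]
    exact fun j => (abs_add_le _ _).trans (by linarith [hv j, hshift j])
  have hdist : dist v z < d := by
    rw [dist_self_add_right]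
    exact ((pi_norm_le_iff_of_nonneg (by positivity)).2 fun j => (hshift j).le).trans_lt
      (by linarith)
  have hQi := (dist_le_pi_dist (Q v) (Q z) i).trans (hclose v hv4 z hz4 hdist).le
  rwa [Real.dist_eq, hvalue s z hz i] at hQi

lemma IsConversion.abs_forcing_le (hQ : IsConversion n f Q) (v : Fin n → ℝ) (i : Fin n) :
    |6 * Q v i - 3| ≤ 3 := by
  obtain ⟨h0, h1⟩ := hQ.2.1 v i
  exact abs_le.2 ⟨by linarith, by linarith⟩

namespace IsConversionMargin

variable {s : Fin n → Bool} {v : Fin n → ℝ} {i : Fin n}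

lemma forcing_le (h : IsConversionMargin f Q δ) (hv : ∀ j, |v j| ≤ 3)
    (hmargin : ∀ j, 1 - δ ≤ align s v j) (hi : f s i ≠ s i) :
    align s (fun j => 6 * Q v j - 3) i ≤ -(5 / 2) := by
  have hQ := abs_le.1 (h s v hv hmargin i)
  cases hs : s i <;> cases hfs : f s i <;> simp_all [align, boolSign] <;> linarith

lemma le_forcing (h : IsConversionMargin f Q δ) (hv : ∀ j, |v j| ≤ 3)
    (hmargin : ∀ j, 1 - δ ≤ align s v j) (hi : f s i = s i) :
    5 / 2 ≤ align s (fun j => 6 * Q v j - 3) i := by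
  have hQ := abs_le.1 (h s v hv hmargin i)
  cases hs : s i <;> simp_all [align, boolSign] <;> linarith

end IsConversionMargin

namespace IsSolD2

lemma hasDerivAt_fast (h : IsSolD2 n γ γ' Q x y) {t : ℝ} (ht : 0 ≤ t) (j : Fin n) :
    HasDerivAt (x · j) (γ j * (oddCubic (x t j) + oddRamp (y t j))) t := by
  simpa only [gcub_add_six_mul, oddRamp] using (h j t ht).1

lemma hasDerivAt_slow (h : IsSolD2 n γ γ' Q x y) {t : ℝ} (ht : 0 ≤ t) (j : Fin n) :
    HasDerivAt (y · j) (γ' j * (oddCubic (y t j) + (6 * Q (x t) j - 3))) t := by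
  simpa only [gcub_add_six_mul] using (h j t ht).2

lemma abs_fast_le (h : IsSolD2 n γ γ' Q x y) (hγ : ∀ j, 0 < γ j) (h0 : ∀ j, |x 0 j| ≤ 3)
    (t : ℝ) (ht : 0 ≤ t) (j : Fin n) : |x t j| ≤ 3 :=
  abs_le_three_of_hasDerivAt (hγ j) (fun _ hu => h.hasDerivAt_fast hu j)
    (fun _ _ => abs_oddRamp_le _) (h0 j) ht

lemma abs_slow_le (h : IsSolD2 n γ γ' Q x y) (hQ : IsConversion n f Q) (hγ' : ∀ j, 0 < γ' j)
    (h0 : ∀ j, |y 0 j| ≤ 3) (t : ℝ) (ht : 0 ≤ t) (j : Fin n) : |y t j| ≤ 3 :=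
  abs_le_three_of_hasDerivAt (hγ' j) (fun _ hu => h.hasDerivAt_slow hu j)
    (fun _ _ => hQ.abs_forcing_le _ j) (h0 j) ht

lemma alignedSolution (h : IsSolD2 n γ γ' Q x y) (hQ : IsConversion n f Q)
    (hδ : IsConversionMargin f Q δ) (hx : ∀ t, 0 ≤ t → ∀ j, |x t j| ≤ 3)
    (hy : ∀ t, 0 ≤ t → ∀ j, |y t j| ≤ 3) (s : Fin n → Bool) :
    AlignedSolution γ γ' δ {j | f s j ≠ s j} (fun t => align s (x t)) (fun t => align s (y t))
      (fun t => align s fun j => 6 * Q (x t) j - 3) where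
  fast t ht j := ((h.hasDerivAt_fast ht j).const_mul (boolSign (s j))).congr_deriv <| by
    simp only [align, oddCubic_boolSign_mul, oddRamp_boolSign_mul]; ring
  slow t ht j := ((h.hasDerivAt_slow ht j).const_mul (boolSign (s j))).congr_deriv <| by
    simp only [align, oddCubic_boolSign_mul]; ring
  abs_fast_le t ht j := (abs_align s (x t) j).trans_le (hx t ht j)
  abs_slow_le t ht j := (abs_align s (y t) j).trans_le (hy t ht j)
  abs_forcing_le t _ j := (abs_align s _ j).trans_le (hQ.abs_forcing_le (x t) j)
  forcing_le t ht hmargin _ hj := hδ.forcing_le (hx t ht) hmargin hj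
  le_forcing t ht hmargin _ hj := hδ.le_forcing (hx t ht) hmargin (not_not.1 hj)

end IsSolD2

lemma exists_flip_eq_singleton {ι : Type*} [Fintype ι] {s s' : ι → Bool}
    (h : hammingDist s s' ≤ 1) (hne : s' ≠ s) : ∃ i, {j | s' j ≠ s j} = {i} := by
  have hsub : {j | s' j ≠ s j}.Subsingleton := fun i hi j hj =>
    Finset.card_le_one.1 h i (by simpa using hi.symm) j (by simpa using hj.symm)
  obtain ⟨i, hi⟩ := Function.ne_iff.1 hne
  exact ⟨i, hsub.eq_singleton_of_mem hi⟩

lemma IsSolD2.isItinerary_iterate (h : IsSolD2 n γ γ' Q x y)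
    (hf : ∀ s, hammingDist s (f s) ≤ 1) (hQ : IsConversion n f Q)
    (hδ : IsConversionMargin f Q δ) (hsep : TimeScaleSeparation γ γ' δ τ)
    (hx0 : ∀ j, |x 0 j| ≤ 3) (hy0 : ∀ j, |y 0 j| ≤ 3) {s₀ : Fin n → Bool}
    (hready : IsReady γ' τ (align s₀ (x 0)) (align s₀ (y 0))) :
    IsItinerary n x (Sdisc n) (Bzero n) fun k => f^[k] s₀ := by
  have haligned := h.alignedSolution hQ hδ (h.abs_fast_le hsep.fast_pos hx0)
    (h.abs_slow_le hQ hsep.slow_pos hy0)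
  refine _root_.isItinerary_iterate
    (Start := fun s a => 0 ≤ a ∧ IsReady γ' τ (align s (x a)) (align s (y a))) ⟨le_rfl, hready⟩
    (fun s a hs => isAt_of_align_pos fun j => zero_lt_one.trans_le (hs.2 j).1)
    (fun s a hfs hs u hu => ⟨hs.1.trans hu, ?_⟩) fun s a hfs hs => ?_
  · have hsol := haligned s
    simp only [hfs, ne_eq, not_true_eq_false, ofPred_false] at hsol
    exact hsol.isReady_of_empty hsep hs.1 hs.2 hu
  · obtain ⟨i, hi⟩ := exists_flip_eq_singleton (hf s) hfs
    obtain ⟨b, c, hswitch, hc⟩ := (hi ▸ haligned s).exists_switch hsep hs.1 hs.2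
    refine ⟨b, c, ⟨hswitch.lt_switch, hswitch.switch_lt, hswitch.add_one_le,
      fun t ht => isAt_of_align_pos (hswitch.before t ht), fun t ht => isAt_of_align_pos ?_⟩,
      by linarith [hs.1, hswitch.add_one_le], ?_⟩
    · simpa only [align_eq_flipCoord hi] using hswitch.after t ht
    · simpa only [align_eq_flipCoord hi] using hc

end System

/-! ### The initial sets -/

section StartSet

variable {n : ℕ} {s : Fin n → Bool}

/-- The set `U^s` of initial conditions. The bound `2` keeps it inside `[x⁻, x⁺]²ⁿ`, and `1/2` puts
the signaling variables above the level `1/3` of `IsReady`. -/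
def startSet (s : Fin n → Bool) : Set ((Fin n → ℝ) × (Fin n → ℝ)) :=
  {p | ∀ j, align s p.1 j ∈ Ioo 1 2 ∧ align s p.2 j ∈ Ioo (1 / 2) 2}

lemma startSet_nonempty (s : Fin n → Bool) : (startSet s).Nonempty := by
  refine ⟨(align s fun _ => 3 / 2, align s fun _ => 3 / 2), fun j => ?_⟩
  simp only [align_align]
  norm_num

lemma isOpen_startSet (s : Fin n → Bool) : IsOpen (startSet s) := by
  simp only [startSet, align, ofPred_forall]
  refine isOpen_iInter_of_finite fun j => IsOpen.inter ?_ ?_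
  · exact isOpen_Ioo.preimage (by fun_prop)
  · exact isOpen_Ioo.preimage (by fun_prop)

lemma abs_lt_two_of_mem_startSet {p : (Fin n → ℝ) × (Fin n → ℝ)} (hp : p ∈ startSet s)
    (j : Fin n) : |p.1 j| < 2 ∧ |p.2 j| < 2 := by
  obtain ⟨⟨h1, h1'⟩, h2, h2'⟩ := hp j
  rw [← abs_align s p.1, ← abs_align s p.2, abs_lt, abs_lt]
  exact ⟨⟨by linarith, h1'⟩, by linarith, h2'⟩

lemma startSet_subset {xm : ℝ} (hxm : xm ≤ -2) (s : Fin n → Bool) :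
    startSet s ⊆ {p | p.1 ∈ Wset n s ∧ ∀ i, p.1 i ∈ Icc xm (-xm) ∧ p.2 i ∈ Icc xm (-xm)} := by
  have hbox : ∀ z : ℝ, |z| < 2 → z ∈ Icc xm (-xm) := fun z hz =>
    ⟨by linarith [(abs_lt.1 hz).1], by linarith [(abs_lt.1 hz).2]⟩
  exact fun p hp => ⟨mem_Wset_iff.2 fun j => (hp j).1.1, fun i =>
    ⟨hbox _ (abs_lt_two_of_mem_startSet hp i).1, hbox _ (abs_lt_two_of_mem_startSet hp i).2⟩⟩

lemma isReady_of_mem_startSet {γ γ' : Fin n → ℝ} {δ τ : ℝ} {p : (Fin n → ℝ) × (Fin n → ℝ)}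
    (hsep : TimeScaleSeparation γ γ' δ τ) (hp : p ∈ startSet s) :
    IsReady γ' τ (align s p.1) (align s p.2) :=
  fun j => ⟨(hp j).1.1.le, by linarith [(hp j).2.1, hsep.loss_nonneg j]⟩

end StartSet

/-- main Theorem, part (iv): for a one-stepping `f`
(`H(s, f(s)) ≤ 1` for all `s`), sufficient separation of time scales makes
`D₂(f, γ, Q)` strongly consistent with `f` on the universal open set
`⋃_s U^s`. -/
theorem stmt_10 (n : ℕ) (f : (Fin n → Bool) → Fin n → Bool)
    (hf : ∀ s : Fin n → Bool, hammingDist s (f s) ≤ 1)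
    (Q : (Fin n → ℝ) → Fin n → ℝ) (hQ : IsConversion n f Q)
    (γ : Fin n → ℝ) (hγ : ∀ i, 0 < γ i)
    (xm : ℝ) (hxm : gcub xm = 0) (hxmu : ∀ z, gcub z = 0 → z = xm) :
    ∃ μ : ℝ, 0 < μ ∧
    ∃ U : (Fin n → Bool) → Set ((Fin n → ℝ) × (Fin n → ℝ)),
      (∀ s, (U s).Nonempty ∧ IsOpen (U s) ∧
        U s ⊆ {p | p.1 ∈ Wset n s ∧
          ∀ i, p.1 i ∈ Set.Icc xm (-xm) ∧ p.2 i ∈ Set.Icc xm (-xm)}) ∧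
      ∀ γ' : Fin n → ℝ, (∀ i, 0 < γ' i ∧ γ' i < μ) →
      ∀ x y : ℝ → Fin n → ℝ, IsSolD2 n γ γ' Q x y →
      (x 0, y 0) ∈ ⋃ s, U s →
      (∃ σ : ℕ → Fin n → Bool, IsItinerary n x (Sdisc n) (Bzero n) σ) ∧
      (∀ σ : ℕ → Fin n → Bool, IsItinerary n x (Sdisc n) (Bzero n) σ →
        ∀ τ : ℕ, σ (τ + 1) = f (σ τ)) := by
  obtain ⟨δ, hδ, hδ', hmargin⟩ := hQ.exists_isConversionMargin
  obtain ⟨μ, hμ, T, hsep⟩ := exists_timeScaleSeparation hγ hδ hδ'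
  refine ⟨μ, hμ, startSet, fun s => ⟨startSet_nonempty s, isOpen_startSet s,
    startSet_subset (lt_neg_two_of_gcub_eq_zero hxm).le s⟩, fun γ' hγ' x y hsol hmem => ?_⟩
  obtain ⟨s₀, hs₀⟩ := mem_iUnion.1 hmem
  have habs := abs_lt_two_of_mem_startSet hs₀
  have hitin : IsItinerary n x (Sdisc n) (Bzero n) fun k => f^[k] s₀ :=
    hsol.isItinerary_iterate hf hQ hmargin (hsep γ' hγ') (fun j => by linarith [(habs j).1])
      (fun j => by linarith [(habs j).2]) (isReady_of_mem_startSet (hsep γ' hγ') hs₀)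
  refine ⟨⟨_, hitin⟩, fun σ hσ k => ?_⟩
  rw [hσ.unique hitin]
  exact Function.iterate_succ_apply' f k s₀
end

section
/- Let f : {0,1}ⁿ → {0,1}ⁿ, let Q : ℝⁿ → [0,1]ⁿ be a continuous conversion of f, let γ₁,…,γ_{2n} > 0 be arbitrary positive reals, and let s ∈ {0,1}ⁿ be a fixed point of f. Define P^s = { x ∈ [x⁻, x⁺]^{2n} : for every i ∈ [n], xᵢ > 1 and x_{n+i} > 2/3 if sᵢ = 1, and xᵢ < −1 and x_{n+i} < −2/3 if sᵢ = 0 }. Then P^s is forward invariant: every solution x of D₂(f,γ,Q) with x(0) ∈ P^s satisfies x(t) ∈ P^s for all t ≥ 0. In particular no signature coordinate xᵢ (i ∈ [n]) ever changes sign along such a solution. -/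
/-!
The substitution `z ↦ -z`, `p ↦ 1 - p` is a symmetry of the scalar equation `ż = r (g(z) + 6p)`.
Applied in the coordinates with `sᵢ = 0` it reduces the problem to the fixed point `s = (1, …, 1)`.
The box `[x⁻, x⁺]` traps every scalar solution whose input takes values in `[0, 1]`, as `g > 0` to
the left of `x⁻`. For the remaining inequalities `xᵢ > 1`, `yᵢ > 2/3` consider the first time at
which one of them fails. If some `xᵢ = 1` then `L(yᵢ) ≥ 1/2` makes `ẋᵢ > 0`; otherwise `x ∈ W^s`, so
`Qᵢ(x) = 1`, and some `yᵢ = 2/3` has `ẏᵢ > 0`. Either is absurd for a function that reaches its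
threshold from above.
-/

open Set Filter Topology

section Barrier

variable {a : ℝ}

lemma nonpos_of_hasDerivWithinAt_Iio_of_eventually_le {φ : ℝ → ℝ} {d T : ℝ}
    (hd : HasDerivWithinAt φ d (Iio T) T) (hle : ∀ᶠ t in 𝓝[<] T, φ T ≤ φ t) : d ≤ 0 := by
  have hslope : Tendsto (slope φ T) (𝓝[<] T) (𝓝 d) :=
    (hasDerivWithinAt_iff_tendsto_slope' self_notMem_Iio).1 hd
  refine le_of_tendsto hslope ?_
  filter_upwards [hle, self_mem_nhdsWithin] with t ht (htT : t < T)
  rw [slope_def_field]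
  exact div_nonpos_of_nonneg_of_nonpos (sub_nonneg.2 ht) (sub_nonpos.2 htT.le)

lemma exists_isLeast_setOf_exists_le {κ : Type*} [Finite κ] {φ : κ → ℝ → ℝ} {c : κ → ℝ}
    (hφ : ∀ k, ContinuousOn (φ k) (Ici a)) (hne : ∃ t ∈ Ici a, ∃ k, φ k t ≤ c k) :
    ∃ T, IsLeast {t ∈ Ici a | ∃ k, φ k t ≤ c k} T := by
  have hclosed : IsClosed {t ∈ Ici a | ∃ k, φ k t ≤ c k} := by
    have hunion : {t ∈ Ici a | ∃ k, φ k t ≤ c k} = ⋃ k, {t ∈ Ici a | φ k t ≤ c k} := by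
      ext t
      simp
    rw [hunion]
    exact isClosed_iUnion_of_finite fun k => isClosed_Ici.isClosed_le (hφ k) continuousOn_const
  have hbdd : BddBelow {t ∈ Ici a | ∃ k, φ k t ≤ c k} := ⟨a, fun _ ht => ht.1⟩
  exact ⟨_, hclosed.csInf_mem hne hbdd, fun _ ht => csInf_le hbdd ht⟩

lemma forall_lt_of_exists_deriv_pos {κ : Type*} [Finite κ] {φ φ' : κ → ℝ → ℝ} {c : κ → ℝ}
    (hφ : ∀ k, ∀ t ∈ Ici a, HasDerivWithinAt (φ k) (φ' k t) (Ici a) t)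
    (ha : ∀ k, c k < φ k a)
    (hexit : ∀ t ∈ Ioi a, (∀ k, c k ≤ φ k t) → (∃ k, φ k t = c k) →
      ∃ k, φ k t = c k ∧ 0 < φ' k t) :
    ∀ t ∈ Ici a, ∀ k, c k < φ k t := by
  by_contra! hfail
  have hcont : ∀ k, ContinuousOn (φ k) (Ici a) := fun k t ht => (hφ k t ht).continuousWithinAt
  obtain ⟨T, ⟨haT, k₀, hk₀⟩, hT⟩ := exists_isLeast_setOf_exists_le hcont hfail
  have haT : a < T := lt_of_le_of_ne haT (by rintro rfl; exact (ha k₀).not_ge hk₀)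
  have hTmem : Ici a ∈ 𝓝 T := Ici_mem_nhds haT
  have hbefore : ∀ k, ∀ᶠ t in 𝓝[<] T, c k < φ k t := fun k => by
    filter_upwards [Ioo_mem_nhdsLT haT] with t ht
    exact not_le.1 fun hle => ht.2.not_ge (hT ⟨ht.1.le, k, hle⟩)
  have hge : ∀ k, c k ≤ φ k T := fun k =>
    ge_of_tendsto (((hcont k).continuousAt hTmem).tendsto.mono_left nhdsWithin_le_nhds)
      ((hbefore k).mono fun _ => le_of_lt)
  obtain ⟨k, hk, hpos⟩ := hexit T haT hge ⟨k₀, le_antisymm hk₀ (hge k₀)⟩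
  have hleft : HasDerivWithinAt (φ k) (φ' k T) (Iio T) T :=
    ((hφ k T haT.le).hasDerivAt hTmem).hasDerivWithinAt
  refine hpos.not_ge (nonpos_of_hasDerivWithinAt_Iio_of_eventually_le hleft ?_)
  filter_upwards [hbefore k] with t ht using hk.trans_le ht.le

lemma le_of_deriv_nonpos_above {φ φ' : ℝ → ℝ} {c : ℝ}
    (hφ : ∀ t ∈ Ici a, HasDerivWithinAt φ (φ' t) (Ici a) t) (ha : φ a ≤ c)
    (hnonpos : ∀ t ∈ Ici a, c < φ t → φ' t ≤ 0) : ∀ t ∈ Ici a, φ t ≤ c := by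
  intro t (hat : a ≤ t)
  -- Tilting the barrier upwards by `ε` makes the comparison of slopes strict.
  have htilted : ∀ ε > 0, φ t ≤ c + ε * (1 + (t - a)) := by
    intro ε hε
    refine image_le_of_deriv_right_lt_deriv_boundary (f := φ) (f' := φ') (a := a) (b := t)
      (B := fun u => c + ε * (1 + (u - a))) (B' := fun _ => ε)
      (fun u hu => (hφ u hu.1).continuousWithinAt.mono Icc_subset_Ici_self)
      (fun u hu => (hφ u hu.1).mono (Ici_subset_Ici.2 hu.1)) (by linarith) (fun u => ?_)
      (fun u hu htouch => ?_) ⟨hat, le_rfl⟩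
    · simpa using ((((hasDerivAt_id u).sub_const a).const_add 1).const_mul ε).const_add c
    · have : 0 < ε * (1 + (u - a)) := mul_pos hε (by linarith [hu.1])
      exact (hnonpos u hu.1 (by rw [htouch]; linarith)).trans_lt hε
  have hlen : 0 < 1 + (t - a) := by linarith
  refine le_of_forall_pos_le_add fun δ hδ => ?_
  simpa [hlen.ne'] using htilted (δ / (1 + (t - a))) (div_pos hδ hlen)

end Barrier

section Nonlinearities

variable {z z₀ p : ℝ}

lemma gcub_neg_add (z p : ℝ) : gcub (-z) + 6 * (1 - p) = -(gcub z + 6 * p) := by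
  unfold gcub
  ring

lemma lt_neg_two_of_gcub_eq_zero_s12 (hz₀ : gcub z₀ = 0) : z₀ < -2 := by
  by_contra! hge
  have hfactor : gcub z₀ = -((z₀ - 1) ^ 2 * (z₀ + 2)) - 1 := by
    unfold gcub
    ring
  have : 0 ≤ (z₀ - 1) ^ 2 * (z₀ + 2) := mul_nonneg (sq_nonneg _) (by linarith)
  linarith

lemma gcub_pos_of_lt_root (hz₀ : gcub z₀ = 0) (hz : z < z₀) : 0 < gcub z := by
  have hlt : z₀ < -2 := lt_neg_two_of_gcub_eq_zero_s12 hz₀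
  have hfactor : gcub z = (z₀ - z) * (z ^ 2 + z * z₀ + z₀ ^ 2 - 3) + gcub z₀ := by
    unfold gcub
    ring
  rw [hfactor, hz₀, add_zero]
  exact mul_pos (sub_pos.2 hz) (by nlinarith)

lemma gcub_add_pos (hz : z ∈ Ioc 0 1) (hp : 1 / 2 ≤ p) : 0 < gcub z + 6 * p := by
  have : 0 < z * (3 - z ^ 2) := mul_pos hz.1 (by nlinarith [hz.1, hz.2])
  unfold gcub
  linarith

lemma Lpl_mem_Icc (z : ℝ) : Lpl z ∈ Icc (0 : ℝ) 1 := by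
  unfold Lpl
  split_ifs <;> constructor <;> linarith

lemma Lpl_neg (z : ℝ) : Lpl (-z) = 1 - Lpl z := by
  unfold Lpl
  split_ifs <;> linarith

lemma half_le_Lpl (hz : 0 ≤ z) : 1 / 2 ≤ Lpl z := by
  unfold Lpl
  split_ifs <;> linarith

end Nonlinearities

/-- `φ` solves the scalar equation `φ̇ = r (g(φ) + 6 p)` with rate `r` and input `p` on `[0, ∞)`,
with a one-sided derivative at `0`. Each coordinate of `D₂(f, γ, Q)` is of this form. -/
def IsDrivenCubic (r : ℝ) (p φ : ℝ → ℝ) : Prop :=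
  ∀ t ∈ Ici (0 : ℝ), HasDerivWithinAt φ (r * (gcub (φ t) + 6 * p t)) (Ici 0) t

namespace IsDrivenCubic

variable {r xm : ℝ} {p φ : ℝ → ℝ}

lemma neg (h : IsDrivenCubic r p φ) : IsDrivenCubic r (fun t => 1 - p t) (fun t => -φ t) := by
  intro t ht
  rw [gcub_neg_add, mul_neg]
  exact (h t ht).fun_neg

lemma le_neg_root (h : IsDrivenCubic r p φ) (hr : 0 ≤ r) (hxm : gcub xm = 0)
    (hp : ∀ t ∈ Ici (0 : ℝ), p t ≤ 1) (h0 : φ 0 ≤ -xm) : ∀ t ∈ Ici (0 : ℝ), φ t ≤ -xm := by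
  refine le_of_deriv_nonpos_above h h0 fun t ht hlt => mul_nonpos_of_nonneg_of_nonpos hr ?_
  have hpos : 0 < gcub (-φ t) := gcub_pos_of_lt_root hxm (neg_lt.1 hlt)
  linarith [gcub_neg_add (φ t) (p t), hp t ht]

lemma mem_Icc_root (h : IsDrivenCubic r p φ) (hr : 0 ≤ r) (hxm : gcub xm = 0)
    (hp : ∀ t ∈ Ici (0 : ℝ), p t ∈ Icc (0 : ℝ) 1) (h0 : φ 0 ∈ Icc xm (-xm)) :
    ∀ t ∈ Ici (0 : ℝ), φ t ∈ Icc xm (-xm) := fun t ht =>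
  ⟨neg_le_neg_iff.1 (h.neg.le_neg_root hr hxm (fun u hu => sub_le_self 1 (hp u hu).1)
      (neg_le_neg h0.1) t ht),
    h.le_neg_root hr hxm (fun u hu => (hp u hu).2) h0.2 t ht⟩

end IsDrivenCubic

lemma forall_lt_of_isDrivenCubic_cascade {ι : Type*} [Finite ι] {γ γ' : ι → ℝ}
    (hγ : ∀ i, 0 < γ i) (hγ' : ∀ i, 0 < γ' i) {x y q : ℝ → ι → ℝ}
    (hx : ∀ i, IsDrivenCubic (γ i) (fun t => Lpl (y t i)) (fun t => x t i))
    (hy : ∀ i, IsDrivenCubic (γ' i) (fun t => q t i) (fun t => y t i))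
    {a b : ℝ} (ha : a ∈ Ioc (0 : ℝ) 1) (hb : b ∈ Ioc (0 : ℝ) 1)
    (hq : ∀ t ∈ Ici (0 : ℝ), (∀ i, a < x t i) → ∀ i, 1 / 2 ≤ q t i)
    (hx0 : ∀ i, a < x 0 i) (hy0 : ∀ i, b < y 0 i) :
    ∀ t ∈ Ici (0 : ℝ), ∀ i, a < x t i ∧ b < y t i := by
  suffices hsum : ∀ t ∈ Ici (0 : ℝ), ∀ k : ι ⊕ ι,
      Sum.elim (fun _ => a) (fun _ => b) k < Sum.elim (fun i t => x t i) (fun i t => y t i) k t from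
    fun t ht i => ⟨hsum t ht (.inl i), hsum t ht (.inr i)⟩
  refine forall_lt_of_exists_deriv_pos
    (φ' := Sum.elim (fun i t => γ i * (gcub (x t i) + 6 * Lpl (y t i)))
      (fun i t => γ' i * (gcub (y t i) + 6 * q t i)))
    (Sum.rec hx hy) (Sum.rec hx0 hy0) fun t ht hge hexit => ?_
  by_cases hxt : ∃ i, x t i = a
  · obtain ⟨i, hi⟩ := hxt
    have hyi : b ≤ y t i := hge (.inr i)
    refine ⟨.inl i, hi, mul_pos (hγ i) (gcub_add_pos (hi ▸ ha) ?_)⟩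
    exact half_le_Lpl (hb.1.le.trans hyi)
  · push Not at hxt
    have hxlt : ∀ i, a < x t i := fun i => lt_of_le_of_ne (hge (.inl i)) (hxt i).symm
    obtain ⟨i | i, hi⟩ := hexit
    · exact absurd hi (hxt i)
    · replace hi : y t i = b := hi
      refine ⟨.inr i, hi, mul_pos (hγ' i) (gcub_add_pos (hi ▸ hb) ?_)⟩
      exact hq t (Ioi_subset_Ici_self ht) hxlt i

section Orientation

/-- The reflection `z ↦ -z` of a coordinate, applied when the Boolean is `false`; it carries the
side of `0` prescribed by the Boolean to the positive side. -/
def orient (b : Bool) (z : ℝ) : ℝ := if b then z else -z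

/-- The reflection `p ↦ 1 - p` of an input in `[0, 1]`, applied when the Boolean is `false`: the
counterpart of `orient` on inputs under the symmetry of the scalar equation. -/
def orientInput (b : Bool) (p : ℝ) : ℝ := if b then p else 1 - p

lemma Lpl_orient (b : Bool) (z : ℝ) : Lpl (orient b z) = orientInput b (Lpl z) := by
  cases b
  · exact Lpl_neg z
  · rfl

lemma orientInput_ite (b : Bool) : orientInput b (if b then 1 else 0) = 1 := by
  cases b <;> simp [orientInput]

lemma lt_orient_iff {b : Bool} {c z : ℝ} : c < orient b z ↔ if b then c < z else z < -c := by
  cases b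
  · exact lt_neg
  · rfl

lemma IsDrivenCubic.orient {r : ℝ} {p φ : ℝ → ℝ} (h : IsDrivenCubic r p φ) (b : Bool) :
    IsDrivenCubic r (fun t => orientInput b (p t)) (fun t => orient b (φ t)) := by
  cases b
  · exact h.neg
  · exact h

end Orientation

section FixedPointRegion

variable {ι : Type*} {xm : ℝ} {s : ι → Bool}

/-- The region `P^s` of pairs `(x, y)` of signature and signaling variables, with `x⁻ = xm` and
`x⁺ = -xm`. -/
def fixedPointRegion (xm : ℝ) (s : ι → Bool) : Set ((ι → ℝ) × (ι → ℝ)) :=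
  {w | ∀ i, w.1 i ∈ Icc xm (-xm) ∧ w.2 i ∈ Icc xm (-xm) ∧
    if s i then 1 < w.1 i ∧ 2 / 3 < w.2 i else w.1 i < -1 ∧ w.2 i < -(2 / 3)}

lemma mem_fixedPointRegion_iff {w : (ι → ℝ) × (ι → ℝ)} :
    w ∈ fixedPointRegion xm s ↔ ∀ i, w.1 i ∈ Icc xm (-xm) ∧ w.2 i ∈ Icc xm (-xm) ∧
      1 < orient (s i) (w.1 i) ∧ 2 / 3 < orient (s i) (w.2 i) := by
  refine forall_congr' fun i => and_congr_right' (and_congr_right' ?_)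
  rw [lt_orient_iff, lt_orient_iff]
  split_ifs <;> rfl

lemma ne_zero_of_mem_fixedPointRegion {w : (ι → ℝ) × (ι → ℝ)} (hw : w ∈ fixedPointRegion xm s)
    (i : ι) : w.1 i ≠ 0 := by
  intro hzero
  have hlt : 1 < orient (s i) (w.1 i) := (mem_fixedPointRegion_iff.1 hw i).2.2.1
  rw [hzero, lt_orient_iff] at hlt
  split_ifs at hlt <;> linarith

end FixedPointRegion

theorem stmt_12_general {ι : Type*} [Finite ι] {Q : (ι → ℝ) → ι → ℝ}
    (hQ : ∀ x i, Q x i ∈ Icc (0 : ℝ) 1) {s : ι → Bool}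
    (hQs : ∀ x, (∀ i, if s i then 1 < x i else x i < -1) → ∀ i, Q x i = if s i then 1 else 0)
    {γ γ' : ι → ℝ} (hγ : ∀ i, 0 < γ i) (hγ' : ∀ i, 0 < γ' i) {xm : ℝ} (hxm : gcub xm = 0)
    {x y : ℝ → ι → ℝ} (hx : ∀ i, IsDrivenCubic (γ i) (fun t => Lpl (y t i)) (fun t => x t i))
    (hy : ∀ i, IsDrivenCubic (γ' i) (fun t => Q (x t) i) (fun t => y t i))
    (h0 : (x 0, y 0) ∈ fixedPointRegion xm s) :
    (∀ t, 0 ≤ t → (x t, y t) ∈ fixedPointRegion xm s) ∧ ∀ t, 0 ≤ t → ∀ i, x t i ≠ 0 := by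
  rw [mem_fixedPointRegion_iff] at h0
  have hx' : ∀ i, IsDrivenCubic (γ i) (fun t => Lpl (orient (s i) (y t i)))
      (fun t => orient (s i) (x t i)) := fun i => by
    simpa only [Lpl_orient] using (hx i).orient (s i)
  have hQ' : ∀ t ∈ Ici (0 : ℝ), (∀ i, 1 < orient (s i) (x t i)) →
      ∀ i, 1 / 2 ≤ orientInput (s i) (Q (x t) i) := fun t _ hlt i => by
    rw [hQs (x t) (fun j => lt_orient_iff.1 (hlt j)) i, orientInput_ite]
    norm_num
  have hlt := forall_lt_of_isDrivenCubic_cascade hγ hγ' hx' (fun i => (hy i).orient (s i))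
    (a := 1) (b := 2 / 3) (by norm_num) (by norm_num) hQ' (fun i => (h0 i).2.2.1)
    (fun i => (h0 i).2.2.2)
  have hmem : ∀ t, 0 ≤ t → (x t, y t) ∈ fixedPointRegion xm s := fun t ht =>
    mem_fixedPointRegion_iff.2 fun i =>
      ⟨(hx i).mem_Icc_root (hγ i).le hxm (fun _ _ => Lpl_mem_Icc _) (h0 i).1 t ht,
        (hy i).mem_Icc_root (hγ' i).le hxm (fun _ _ => hQ _ i) (h0 i).2.1 t ht, hlt t ht i⟩
  exact ⟨hmem, fun t ht => ne_zero_of_mem_fixedPointRegion (hmem t ht)⟩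

/-- the fixed-point 'warm-up' case of the main Theorem: if `s`
is a fixed point of `f`, then the region `P^s` (where for each `i ∈ [n]` the
signature variable is beyond `±1` and the signaling variable beyond `±2/3`,
on the side prescribed by `sᵢ`, all within `[x⁻, x⁺]`) is forward invariant
for `D₂(f, γ, Q)`, for arbitrary positive rates `γ, γ'`; in particular no
signature coordinate ever changes sign. -/
theorem stmt_12 (n : ℕ) (f : (Fin n → Bool) → Fin n → Bool)
    (Q : (Fin n → ℝ) → Fin n → ℝ) (hQ : IsConversion n f Q)
    (γ γ' : Fin n → ℝ) (hγ : ∀ i, 0 < γ i) (hγ' : ∀ i, 0 < γ' i)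
    (s : Fin n → Bool) (hs : f s = s)
    (xm : ℝ) (hxm : gcub xm = 0) (hxmu : ∀ z, gcub z = 0 → z = xm)
    (x y : ℝ → Fin n → ℝ) (hsol : IsSolD2 n γ γ' Q x y)
    (h0 : ∀ i, x 0 i ∈ Set.Icc xm (-xm) ∧ y 0 i ∈ Set.Icc xm (-xm) ∧
      (if s i then 1 < x 0 i ∧ 2 / 3 < y 0 i
       else x 0 i < -1 ∧ y 0 i < -(2 / 3))) :
    (∀ t : ℝ, 0 ≤ t → ∀ i,
      x t i ∈ Set.Icc xm (-xm) ∧ y t i ∈ Set.Icc xm (-xm) ∧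
      (if s i then 1 < x t i ∧ 2 / 3 < y t i
       else x t i < -1 ∧ y t i < -(2 / 3))) ∧
    (∀ t : ℝ, 0 ≤ t → ∀ i, x t i ≠ 0) := by
  exact stmt_12_general hQ.2.1 (fun u hu i => by simpa only [hs] using hQ.2.2 s u hu i) hγ hγ' hxm
    (fun i t ht => (hsol i t ht).1.hasDerivWithinAt)
    (fun i t ht => (hsol i t ht).2.hasDerivWithinAt) h0
end
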